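/- Let D = D₁×⋯×D_n ⊂ ℂ^n be an open polydisc centered at the origin, Γ ⊂ ℂ^n∖{0} an open convex cone, and V = D×Γ. Fix integers p ≥ 0 and q ≥ 1. Let f = Σ_{I,J} f_{IJ} dz^I∧dz̄^J be a (p,q)-form in the z-variables whose coefficients f_{IJ} (I,J strictly increasing multi-indices in {1,…,n} of lengths p and q) all belong to 𝔑^∞(V) and are defined and of class C^∞_z𝒪_ζ on a common infinitesimal wedge W of type V, and assume ∂̄_z f = 0 on W, i.e. for every I and every strictly increasing multi-index K = (k₁<⋯<k_{q+1}) one has Σ_{ℓ=1}^{q+1} (−1)^{ℓ−1} ∂f_{I, K∖{k_ℓ}}/∂z̄_{k_ℓ} = 0. Then for every polydisc D' with closure contained in D there exist functions u_{IL} ∈ 𝔑^∞(D'×Γ) (L strictly increasing of length q−1) such that ∂̄_z u = f on an infinitesimal wedge of type D'×Γ, i.e. for every I and every strictly increasing J = (j₁<⋯<j_q), Σ_{ℓ=1}^{q} (−1)^{ℓ−1} ∂u_{I, J∖{j_ℓ}}/∂z̄_{j_ℓ} = f_{IJ}. -/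

import Mathlib

open Complex

noncomputable section

/-- `ℂ^n`. -/
abbrev Cn (n : ℕ) : Type := Fin n → ℂ

/-- The space `ℂ^n_z × ℂ^n_ζ`. -/
abbrev Pt (n : ℕ) : Type := Cn n × Cn n

/-- The Euclidean norm of `ζ ∈ ℂ^n`. -/
def eucNorm {n : ℕ} (ζ : Cn n) : ℝ := Real.sqrt (∑ i, Complex.normSq (ζ i))

/-- `V` is a cone: stable under the dilations `(z, ζ) ↦ (z, tζ)`, `t > 0`. -/
def IsCone {n : ℕ} (V : Set (Pt n)) : Prop :=
  ∀ p ∈ V, ∀ t : ℝ, 0 < t → (p.1, t • p.2) ∈ V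

/-- `K` is a relatively compact subset of `V`. -/
def RelCpt {n : ℕ} (K V : Set (Pt n)) : Prop :=
  IsCompact (closure K) ∧ closure K ⊆ V

/-- `W` is an infinitesimal wedge of type `V`. -/
def IsInfWedge {n : ℕ} (V W : Set (Pt n)) : Prop :=
  W ⊆ V ∧ ∀ K : Set (Pt n), RelCpt K V →
    ∃ δ : ℝ, 0 < δ ∧ ∀ p ∈ K, ∀ t : ℝ, δ < t → (p.1, t • p.2) ∈ W

/-- `V' ⋐cone V` : `V'` is a relatively compact cone in `V`. -/
def ConeRelCpt {n : ℕ} (V' V : Set (Pt n)) : Prop :=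
  ∃ K : Set (Pt n), RelCpt K V ∧
    V' = {p : Pt n | ∃ t : ℝ, 0 < t ∧ ∃ q ∈ K, p = (q.1, t • q.2)}

/-- Wirtinger derivative `∂/∂z_i` in the first variable. -/
def dz {n : ℕ} (i : Fin n) (f : Pt n → ℂ) : Pt n → ℂ := fun p =>
  (1 / 2 : ℂ) * (fderiv ℝ f p ((Pi.single i 1 : Cn n), 0)
    - Complex.I * fderiv ℝ f p ((Pi.single i Complex.I : Cn n), 0))

/-- Wirtinger derivative `∂/∂z̄_i` in the first variable. -/
def dzbar {n : ℕ} (i : Fin n) (f : Pt n → ℂ) : Pt n → ℂ := fun p =>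
  (1 / 2 : ℂ) * (fderiv ℝ f p ((Pi.single i 1 : Cn n), 0)
    + Complex.I * fderiv ℝ f p ((Pi.single i Complex.I : Cn n), 0))

/-- The iterated mixed derivative `∂^α_z ∂^β_z̄` in the first variable. -/
def mixedDeriv {n : ℕ} (α β : Fin n → ℕ) (f : Pt n → ℂ) : Pt n → ℂ :=
  ((List.ofFn fun i => (dz i)^[α i]) ++ (List.ofFn fun i => (dzbar i)^[β i])).foldr
    (fun d g => d g) f

/-- `f ∈ C^∞_z 𝒪_ζ (W)` : `f` is `C^∞` on `W` and holomorphic in the second variable. -/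
def CinfO {n : ℕ} (W : Set (Pt n)) (f : Pt n → ℂ) : Prop :=
  ContDiffOn ℝ (⊤ : ℕ∞) f W ∧
  ∀ z : Cn n, DifferentiableOn ℂ (fun ζ => f (z, ζ)) {ζ : Cn n | (z, ζ) ∈ W}

/-- `f` is a null-symbol of `C^∞`-type on `V`, defined on the infinitesimal wedge `W`. -/
def IsNullSymbolInf {n : ℕ} (V W : Set (Pt n)) (f : Pt n → ℂ) : Prop :=
  IsInfWedge V W ∧ CinfO W f ∧
  ∀ V' : Set (Pt n), IsOpen V' → IsCone V' → ConeRelCpt V' V →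
    ∃ W' : Set (Pt n), W' ⊆ W ∧ IsInfWedge V' W' ∧
      ∀ α β : Fin n → ℕ, ∃ h C : ℝ, 0 < h ∧ 0 < C ∧
        ∀ p ∈ W', ‖mixedDeriv α β f p‖ ≤ C * Real.exp (-h * eucNorm p.2)

/-- `f` is a symbol of `C^∞`-type on `V`, defined on the infinitesimal wedge `W`. -/
def IsSymbolInf {n : ℕ} (V W : Set (Pt n)) (f : Pt n → ℂ) : Prop :=
  IsInfWedge V W ∧ CinfO W f ∧
  (∀ V' : Set (Pt n), IsOpen V' → IsCone V' → ConeRelCpt V' V →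
    ∃ W' : Set (Pt n), W' ⊆ W ∧ IsInfWedge V' W' ∧
      ∀ α β : Fin n → ℕ, ∀ h : ℝ, 0 < h → ∃ C : ℝ, 0 < C ∧
        ∀ p ∈ W', ‖mixedDeriv α β f p‖ ≤ C * Real.exp (h * eucNorm p.2)) ∧
  ∀ i : Fin n, ∃ Wi : Set (Pt n), IsNullSymbolInf V Wi (dzbar i f)

theorem locInt_kernel : MeasureTheory.LocallyIntegrable (fun w : ℂ => ((Real.pi : ℂ) * w)⁻¹) := by
  refine MeasureTheory.locallyIntegrable_of_norm_le_rpow (C := Real.pi⁻¹) (α := 1) ?_ ?_ ?_ ?_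
  · simp
  · simp
  · refine Filter.Eventually.of_forall fun w => ?_
    rw [norm_inv, norm_mul, mul_inv, Real.rpow_neg (norm_nonneg w), Real.rpow_one]
    simp [abs_of_pos Real.pi_pos]
  · exact (Measurable.inv (measurable_const.mul measurable_id)).aestronglyMeasurable

theorem polar_id (L : ℂ →L[ℝ] ℂ) (r θ : ℝ) (hr : 0 < r) :
    (r : ℂ) * (((Real.pi : ℂ) * (r * (Real.cos θ + Real.sin θ * I)))⁻¹ * ((1 / 2 : ℂ) * (L 1 + I * L I)))
      = (2 * Real.pi : ℂ)⁻¹ * (L (Real.cos θ + Real.sin θ * I) + I * L (I * (Real.cos θ + Real.sin θ * I))) := by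
  have h1 : L (Real.cos θ + Real.sin θ * I) = Real.cos θ * L 1 + Real.sin θ * L I := by
    have : (Real.cos θ + Real.sin θ * I : ℂ) = Real.cos θ • (1:ℂ) + Real.sin θ • I := by simp
    rw [this, map_add, map_smul, map_smul]; simp
  have h2 : L (I * (Real.cos θ + Real.sin θ * I)) = Real.cos θ * L I - Real.sin θ * L 1 := by
    have : (I * (Real.cos θ + Real.sin θ * I) : ℂ) = Real.cos θ • I - Real.sin θ • (1:ℂ) := by
      simp only [real_smul]; linear_combination (Real.sin θ : ℂ) * I_mul_I
    rw [this, map_sub, map_smul, map_smul]; simp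
  rw [h1, h2]
  have hp : (Real.pi : ℂ) ≠ 0 := by exact_mod_cast Real.pi_ne_zero
  have hr' : (r : ℂ) ≠ 0 := by exact_mod_cast hr.ne'
  have hcs : (Real.cos θ : ℂ)^2 + (Real.sin θ : ℂ)^2 = 1 := by exact_mod_cast Real.cos_sq_add_sin_sq θ
  have he : (Real.cos θ + Real.sin θ * I : ℂ) * (Real.cos θ - Real.sin θ * I) = 1 := by
    linear_combination hcs - (Real.sin θ : ℂ)^2 * I_sq
  have hne : (Real.cos θ + Real.sin θ * I : ℂ) ≠ 0 := left_ne_zero_of_mul_eq_one he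
  have hinv : (Real.cos θ + Real.sin θ * I : ℂ)⁻¹ = Real.cos θ - Real.sin θ * I := by
    exact inv_eq_of_mul_eq_one_right he
  rw [mul_inv, mul_inv, mul_inv, hinv]
  field_simp
  linear_combination (- (Real.sin θ : ℂ) * L I) * I_sq

theorem pompeiu0 (ψ : ℂ → ℂ) (hψ : ContDiff ℝ 1 ψ) (hs : HasCompactSupport ψ) :
    ∫ w : ℂ, ((Real.pi : ℂ) * w)⁻¹ * ((1 / 2 : ℂ) * (fderiv ℝ ψ w 1 + I * fderiv ℝ ψ w I)) = - ψ 0 := by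
  obtain ⟨R, hR0, hR⟩ : ∃ R : ℝ, 0 < R ∧ ∀ w, R ≤ ‖w‖ → ψ w = 0 ∧ fderiv ℝ ψ w = 0 := by
    obtain ⟨R, hR⟩ := hs.isCompact.isBounded.exists_norm_le
    refine ⟨max R 0 + 1, by positivity, fun w hw => ?_⟩
    have : w ∉ tsupport ψ := fun h => by
      have := hR w h
      have := le_max_left R 0
      linarith
    refine ⟨image_eq_zero_of_notMem_tsupport this, ?_⟩
    by_contra h
    exact this (support_fderiv_subset ℝ h)
  have hdc : Continuous (fderiv ℝ ψ) := hψ.continuous_fderiv (by norm_num)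
  have hdiff : Differentiable ℝ ψ := hψ.differentiable (by norm_num)
  let e : ℝ → ℂ := fun θ => Real.cos θ + Real.sin θ * I
  have hec : Continuous e := by
    show Continuous (fun θ : ℝ => ((Real.cos θ : ℝ) : ℂ) + (Real.sin θ : ℝ) * I); fun_prop
  have hen : ∀ θ, ‖e θ‖ = 1 := fun θ => by
    have : e θ = Complex.exp (θ * I) := by simp [e, Complex.exp_mul_I]
    rw [this, Complex.norm_exp_ofReal_mul_I]
  let A : ℝ × ℝ → ℂ := fun p => fderiv ℝ ψ (p.1 * e p.2) (e p.2)
  let B : ℝ × ℝ → ℂ := fun p => fderiv ℝ ψ (p.1 * e p.2) (I * e p.2)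
  have hAc : Continuous A := by
    show Continuous (fun p : ℝ × ℝ => fderiv ℝ ψ (p.1 * e p.2) (e p.2)); fun_prop
  have hBc : Continuous B := by
    show Continuous (fun p : ℝ × ℝ => fderiv ℝ ψ (p.1 * e p.2) (I * e p.2)); fun_prop
  have hnorm : ∀ p : ℝ × ℝ, ‖(p.1 : ℂ) * e p.2‖ = |p.1| := fun p => by simp [hen]
  have hint : ∀ F : ℝ × ℝ → ℂ, Continuous F → (∀ p, R ≤ |p.1| → F p = 0) →
      MeasureTheory.IntegrableOn F (Set.Ioi 0 ×ˢ Set.Ioo (-Real.pi) Real.pi) := by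
    intro F hF h0
    have h1 : MeasureTheory.IntegrableOn F (Set.Icc 0 R ×ˢ Set.Icc (-Real.pi) Real.pi) :=
      hF.continuousOn.integrableOn_compact (isCompact_Icc.prod isCompact_Icc)
    refine MeasureTheory.IntegrableOn.of_forall_sdiff_eq_zero h1 (measurableSet_Ioi.prod measurableSet_Ioo) ?_
    rintro ⟨x, y⟩ ⟨⟨hx, hy⟩, h2⟩
    apply h0
    simp only [Set.mem_Ioi, Set.mem_Ioo, Set.mem_prod, Set.mem_Icc, not_and_or, not_le] at hx hy h2
    rcases h2 with (h|h)|(h|h) <;> [linarith; skip; linarith; linarith]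
    exact h.le.trans (le_abs_self _)
  have hA := hint A hAc fun p hp => by simp [A, (hR _ (by rw [hnorm]; exact hp)).2]
  have hB := hint B hBc fun p hp => by simp [B, (hR _ (by rw [hnorm]; exact hp)).2]
  rw [← Complex.integral_comp_polarCoord_symm, polarCoord_target]
  have h1 : ∫ p in Set.Ioi 0 ×ˢ Set.Ioo (-Real.pi) Real.pi, p.1 • (((Real.pi : ℂ) * Complex.polarCoord.symm p)⁻¹ * ((1 / 2 : ℂ) * (fderiv ℝ ψ (Complex.polarCoord.symm p) 1 + I * fderiv ℝ ψ (Complex.polarCoord.symm p) I)))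
    = ∫ p in Set.Ioi 0 ×ˢ Set.Ioo (-Real.pi) Real.pi, (2 * Real.pi : ℂ)⁻¹ * (A p + I * B p) := by
    refine MeasureTheory.setIntegral_congr_fun (measurableSet_Ioi.prod measurableSet_Ioo) ?_
    rintro ⟨r, θ⟩ ⟨hr, -⟩
    have := polar_id (fderiv ℝ ψ (r * e θ)) r θ hr
    simp only [Complex.polarCoord_symm_apply, real_smul]
    exact this
  have hrd : ∀ θ r, HasDerivAt (fun r : ℝ => ψ (r * e θ)) (A (r, θ)) r := by
    intro θ r
    have h1 : HasDerivAt (fun r : ℝ => (r : ℂ) * e θ) (e θ) r := by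
      simpa using (Complex.ofRealCLM.hasDerivAt (x := r)).mul_const (e θ)
    exact (hdiff (r * e θ)).hasFDerivAt.comp_hasDerivAt r h1
  have hθd : ∀ (r θ : ℝ), HasDerivAt (fun θ : ℝ => ψ (r * e θ)) (r * B (r, θ)) θ := by
    intro r θ
    have h1 : HasDerivAt e (I * e θ) θ := by
      have h2 : HasDerivAt (fun θ : ℝ => ((Real.cos θ : ℝ) : ℂ) + ((Real.sin θ : ℝ) : ℂ) * I) (((-Real.sin θ : ℝ) : ℂ) + ((Real.cos θ : ℝ) : ℂ) * I) θ :=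
        (Real.hasDerivAt_cos θ).ofReal_comp.add ((Real.hasDerivAt_sin θ).ofReal_comp.mul_const I)
      convert h2 using 1
      simp only [e]; push_cast
      linear_combination (Complex.sin θ : ℂ) * I_mul_I
    have h3 : HasDerivAt (fun θ : ℝ => (r : ℂ) * e θ) ((r : ℝ) • (I * e θ)) θ := by
      simpa using h1.const_mul (r : ℂ)
    have h4 := (hdiff (r * e θ)).hasFDerivAt.comp_hasDerivAt θ h3
    rw [map_smul, Complex.real_smul] at h4
    exact h4
  have hAint : ∫ p in Set.Ioi 0 ×ˢ Set.Ioo (-Real.pi) Real.pi, A p = - (2 * Real.pi) * ψ 0 := by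
    rw [MeasureTheory.Measure.volume_eq_prod] at hA ⊢
    have hsw : MeasureTheory.IntegrableOn (fun z : ℝ × ℝ => A z.swap) (Set.Ioo (-Real.pi) Real.pi ×ˢ Set.Ioi 0)
        (MeasureTheory.volume.prod MeasureTheory.volume) := hA.swap
    rw [← MeasureTheory.setIntegral_prod_swap, MeasureTheory.setIntegral_prod _ hsw]
    have h3 : ∀ θ ∈ Set.Ioo (-Real.pi) Real.pi, ∫ r in Set.Ioi 0, A (Prod.swap (θ, r)) = - ψ 0 := by
      intro θ _
      have h0 : ∀ r : ℝ, R ≤ r → ψ (r * e θ) = 0 ∧ A (r, θ) = 0 := fun r hr => by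
        have := hR (r * e θ) (by rw [hnorm (r, θ)]; exact hr.trans (le_abs_self _))
        simp [A, this]
      have h4 : MeasureTheory.IntegrableOn (fun r : ℝ => A (r, θ)) (Set.Ioi 0) := by
        have h5 : MeasureTheory.IntegrableOn (fun r : ℝ => A (r, θ)) (Set.Icc 0 R) :=
          (Continuous.continuousOn (by fun_prop)).integrableOn_compact isCompact_Icc
        refine MeasureTheory.IntegrableOn.of_forall_sdiff_eq_zero h5 measurableSet_Ioi ?_
        rintro r ⟨hr, hr2⟩
        refine (h0 r ?_).2
        by_contra hh
        exact hr2 ⟨le_of_lt hr, (not_le.1 hh).le⟩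
      have h6 := MeasureTheory.integral_Ioi_of_hasDerivAt_of_tendsto' (a := 0) (m := 0)
        (fun r _ => hrd θ r) h4 (by
          refine tendsto_const_nhds.congr' ?_
          filter_upwards [Filter.eventually_ge_atTop R] with r hr using (h0 r hr).1.symm)
      simpa using h6
    rw [MeasureTheory.setIntegral_congr_fun measurableSet_Ioo h3]
    simp [MeasureTheory.measureReal_def, Real.volume_Ioo, Real.pi_pos.le]
    left; ring
  have hBint : ∫ p in Set.Ioi 0 ×ˢ Set.Ioo (-Real.pi) Real.pi, B p = 0 := by
    rw [MeasureTheory.Measure.volume_eq_prod] at hB ⊢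
    rw [MeasureTheory.setIntegral_prod _ hB]
    refine MeasureTheory.setIntegral_eq_zero_of_forall_eq_zero fun r hr => ?_
    have hr0 : (r : ℂ) ≠ 0 := by exact_mod_cast (ne_of_gt hr)
    have h2 := intervalIntegral.integral_eq_sub_of_hasDerivAt (a := -Real.pi) (b := Real.pi) (fun θ _ => hθd r θ)
      (by apply Continuous.intervalIntegrable; fun_prop)
    have h3 : e Real.pi = e (-Real.pi) := by simp [e]
    rw [h3, sub_self, intervalIntegral.integral_const_mul] at h2
    have h4 := (mul_eq_zero.1 h2).resolve_left hr0
    rwa [intervalIntegral.integral_of_le (by linarith [Real.pi_pos]), MeasureTheory.integral_Ioc_eq_integral_Ioo] at h4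
  rw [h1, MeasureTheory.integral_const_mul, MeasureTheory.integral_add hA (hB.const_mul I), MeasureTheory.integral_const_mul, hAint, hBint]
  have hp : (Real.pi : ℂ) ≠ 0 := by exact_mod_cast Real.pi_ne_zero
  field_simp
  ring

theorem pompeiu (φ : ℂ → ℂ) (hφ : ContDiff ℝ 1 φ) (hs : HasCompactSupport φ) (z : ℂ) :
    ∫ w : ℂ, ((Real.pi : ℂ) * w)⁻¹ * ((1 / 2 : ℂ) * (fderiv ℝ φ (z - w) 1 + I * fderiv ℝ φ (z - w) I)) = φ z := by
  have h1 := pompeiu0 (fun w => φ (z - w)) (by fun_prop)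
    (hs.comp_homeomorph (Homeomorph.subLeft z))
  have h2 : ∀ w, fderiv ℝ (fun w => φ (z - w)) w = - fderiv ℝ φ (z - w) := by
    intro w
    have h3 : HasFDerivAt (fun w : ℂ => z - w) (-(ContinuousLinearMap.id ℝ ℂ)) w := (hasFDerivAt_id w).const_sub z
    have h4 := ((hφ.differentiable (by norm_num)) (z - w)).hasFDerivAt.comp w h3
    have h5 := h4.fderiv
    ext v
    change (fderiv ℝ (φ ∘ fun w => z - w) w) v = _
    rw [h5]; simp
  simp only [h2] at h1
  rw [sub_zero] at h1
  rw [← neg_inj, ← h1, ← MeasureTheory.integral_neg]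
  congr 1; ext w; simp; ring

/-- kernel -/
def ckK (w : ℂ) : ℂ := ((Real.pi : ℂ) * w)⁻¹

/-- Cauchy transform with cutoff in the variable `z_k` -/
def cauT {n : ℕ} (k : Fin n) (χ : ℂ → ℂ) (g : Pt n → ℂ) (p : Pt n) : ℂ :=
  ∫ w : ℂ, ckK w * (χ (p.1 k - w) * g (Function.update p.1 k (p.1 k - w), p.2))

/-- product domain -/
def Om {n : ℕ} (A : Fin n → Set ℂ) (G : Set (Cn n)) : Set (Pt n) :=
  {p | (∀ j, p.1 j ∈ A j) ∧ p.2 ∈ G}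

def Os {n : ℕ} (k : Fin n) (A : Fin n → Set ℂ) (G : Set (Cn n)) : Set (Pt n) :=
  {p | (∀ j, j ≠ k → p.1 j ∈ A j) ∧ p.2 ∈ G}

theorem isOpen_Om {n : ℕ} {A : Fin n → Set ℂ} {G : Set (Cn n)} (hA : ∀ j, IsOpen (A j)) (hG : IsOpen G) :
    IsOpen (Om A G) := by
  have : Om A G = (⋂ j, (fun p : Pt n => p.1 j) ⁻¹' A j) ∩ Prod.snd ⁻¹' G := by
    ext p; simp [Om]
  rw [this]
  exact (isOpen_iInter_of_finite fun j => (hA j).preimage (by fun_prop)).inter (hG.preimage continuous_snd)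

theorem isOpen_Os {n : ℕ} {k : Fin n} {A : Fin n → Set ℂ} {G : Set (Cn n)} (hA : ∀ j, IsOpen (A j)) (hG : IsOpen G) :
    IsOpen (Os k A G) := by
  have : Os k A G = Om (fun j => if j = k then Set.univ else A j) G := by
    ext p; simp only [Os, Om, Set.mem_ofPred_eq]
    refine and_congr_left fun _ => forall_congr' fun j => ?_
    by_cases h : j = k <;> simp [h]
  rw [this]
  refine isOpen_Om (fun j => ?_) hG
  by_cases h : j = k <;> simp [h, hA]

theorem Om_sub_Os {n : ℕ} {k : Fin n} {A : Fin n → Set ℂ} {G : Set (Cn n)} : Om A G ⊆ Os k A G :=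
  fun _ hp => ⟨fun j _ => hp.1 j, hp.2⟩

theorem upd_mem {n : ℕ} {k : Fin n} {A : Fin n → Set ℂ} {G : Set (Cn n)} {p : Pt n} (hp : p ∈ Os k A G)
    {y : ℂ} (hy : y ∈ A k) : (Function.update p.1 k y, p.2) ∈ Om A G := by
  refine ⟨fun j => ?_, hp.2⟩
  by_cases h : j = k
  · subst h; simpa using hy
  · simpa [h] using hp.1 j h

/-- cutoff functions -/
structure Cut (S : Set ℂ) (χ : ℂ → ℂ) : Prop where
  smooth : ContDiff ℝ (⊤ : ℕ∞) χ
  cpt : HasCompactSupport χ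
  sub : tsupport χ ⊆ S

/-- updating as a linear-ish map -/
def updL {n : ℕ} (k : Fin n) : (Pt n × ℂ) →L[ℝ] Pt n :=
  ContinuousLinearMap.prod
    (ContinuousLinearMap.pi fun j => if j = k then ContinuousLinearMap.snd ℝ (Pt n) ℂ
      else (ContinuousLinearMap.proj (R := ℝ) (φ := fun _ : Fin n => ℂ) j).comp ((ContinuousLinearMap.fst ℝ (Cn n) (Cn n)).comp (ContinuousLinearMap.fst ℝ (Pt n) ℂ)))
    ((ContinuousLinearMap.snd ℝ (Cn n) (Cn n)).comp (ContinuousLinearMap.fst ℝ (Pt n) ℂ))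

theorem updL_apply {n : ℕ} (k : Fin n) (q : Pt n × ℂ) :
    updL k q = (Function.update q.1.1 k q.2, q.1.2) := by
  refine Prod.ext ?_ rfl
  ext j
  by_cases h : j = k
  · subst h; simp [updL]
  · simp [updL, h]

def gtil {n : ℕ} (k : Fin n) (χ : ℂ → ℂ) (g : Pt n → ℂ) (p : Pt n) (y : ℂ) : ℂ :=
  χ y * g (Function.update p.1 k y, p.2)

theorem gt_unc {n : ℕ} (k : Fin n) (χ : ℂ → ℂ) (g : Pt n → ℂ) :
    (Function.HasUncurry.uncurry (gtil k χ g)) = fun q : Pt n × ℂ => χ q.2 * g (updL k q) := by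
  ext q; rw [updL_apply]; rfl

section
variable {n : ℕ} {k : Fin n} {A : Fin n → Set ℂ} {G : Set (Cn n)}

theorem gt_contDiffOn (hA : ∀ j, IsOpen (A j)) (hG : IsOpen G) {χ : ℂ → ℂ} (hχ : Cut (A k) χ)
    {g : Pt n → ℂ} {m : WithTop ℕ∞} (hm : m ≤ (⊤ : ℕ∞)) (hg : ContDiffOn ℝ m g (Om A G)) :
    ContDiffOn ℝ m (Function.HasUncurry.uncurry (gtil k χ g)) (Os k A G ×ˢ Set.univ) := by
  rw [gt_unc]
  rintro q ⟨hq, -⟩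
  apply ContDiffAt.contDiffWithinAt
  by_cases hy : q.2 ∈ A k
  · have h1 : ContDiffAt ℝ m g (updL k q) := by
      refine hg.contDiffAt ((isOpen_Om hA hG).mem_nhds ?_)
      rw [updL_apply]; exact upd_mem hq hy
    refine ContDiffAt.mul ?_ (h1.comp q (updL k).contDiff.contDiffAt)
    exact ((hχ.smooth.of_le hm).contDiffAt).comp q contDiff_snd.contDiffAt
  · have hy' : q.2 ∉ tsupport χ := fun h => hy (hχ.sub h)
    have h2 : (fun q : Pt n × ℂ => χ q.2 * g (updL k q)) =ᶠ[nhds q] fun _ => 0 := by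
      have h3 := (notMem_tsupport_iff_eventuallyEq.1 hy')
      filter_upwards [continuous_snd.continuousAt.eventually h3] with a ha
      simp [ha]
    exact contDiffAt_const.congr_of_eventuallyEq h2

theorem gt_fderiv (hA : ∀ j, IsOpen (A j)) (hG : IsOpen G) {χ : ℂ → ℂ} (hχ : Cut (A k) χ)
    {g : Pt n → ℂ} (hg : ContDiffOn ℝ 1 g (Om A G)) {p : Pt n} (hp : p ∈ Os k A G) (y : ℂ) (v : Pt n) :
    fderiv ℝ (Function.HasUncurry.uncurry (gtil k χ g)) (p, y) (v, v.1 k) =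
      gtil k (fun y => fderiv ℝ χ y (v.1 k)) g p y + gtil k χ (fun x => fderiv ℝ g x v) p y := by
  rw [gt_unc]
  have hu : updL k (v, v.1 k) = v := by rw [updL_apply]; simp
  by_cases hy : y ∈ A k
  · have h1 : DifferentiableAt ℝ g (updL k (p, y)) := by
      refine (hg.contDiffAt ((isOpen_Om hA hG).mem_nhds ?_)).differentiableAt (by norm_num)
      rw [updL_apply]; exact upd_mem hp hy
    have h2 : HasFDerivAt (fun q : Pt n × ℂ => g (updL k q)) _ (p, y) :=
      h1.hasFDerivAt.comp (p, y) (updL k).hasFDerivAt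
    have h3 : HasFDerivAt (fun q : Pt n × ℂ => χ q.2) _ (p, y) :=
      ((hχ.smooth.differentiable (by simp)) y).hasFDerivAt.comp (p, y) hasFDerivAt_snd
    have h4 : HasFDerivAt (fun q : Pt n × ℂ => χ q.2 * g (updL k q)) _ (p, y) := h3.mul h2
    rw [h4.fderiv]
    simp only [gtil, ContinuousLinearMap.add_apply, ContinuousLinearMap.smul_apply, ContinuousLinearMap.comp_apply, hu, smul_eq_mul]
    rw [updL_apply]
    simp
    ring
  · have hy' : y ∉ tsupport χ := fun h => hy (hχ.sub h)
    have h3 := (notMem_tsupport_iff_eventuallyEq.1 hy')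
    have h2 : (fun q : Pt n × ℂ => χ q.2 * g (updL k q)) =ᶠ[nhds (p, y)] fun _ => 0 := by
      have h4 : Filter.Tendsto Prod.snd (nhds (p, y)) (nhds y) := continuous_snd.continuousAt
      filter_upwards [h4.eventually h3] with a ha
      simp [ha]
    rw [h2.fderiv_eq]
    have h5 : fderiv ℝ χ y = 0 := by rw [h3.fderiv_eq]; simp
    have h6 : χ y = 0 := image_eq_zero_of_notMem_tsupport hy'
    simp [gtil, h5, h6]

theorem Cut.deriv {S : Set ℂ} {χ : ℂ → ℂ} (hχ : Cut S χ) (v : ℂ) : Cut S (fun y => fderiv ℝ χ y v) := by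
  refine ⟨?_, hχ.cpt.fderiv_apply ℝ v, (tsupport_fderiv_apply_subset ℝ v).trans hχ.sub⟩
  exact (hχ.smooth.fderiv_right (m := (⊤ : ℕ∞)) (by simp)).clm_apply contDiff_const

theorem cauT_integrable (hA : ∀ j, IsOpen (A j)) (hG : IsOpen G) {χ : ℂ → ℂ} (hχ : Cut (A k) χ)
    {g : Pt n → ℂ} (hg : ContinuousOn g (Om A G)) {p : Pt n} (hp : p ∈ Os k A G) (x : ℂ) :
    MeasureTheory.Integrable (fun w => ckK w * gtil k χ g p (x - w)) := by
  have h0 : ContDiffOn ℝ 0 g (Om A G) := contDiffOn_zero.2 hg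
  have h1 := (gt_contDiffOn hA hG hχ (by simp) h0).continuousOn
  have h2 : Continuous (gtil k χ g p) := by
    refine h1.comp_continuous (f := fun y => (p, y)) (by fun_prop) fun y => ⟨hp, trivial⟩
  have h3 : HasCompactSupport (gtil k χ g p) := hχ.cpt.mul_right
  have h4 : HasCompactSupport (fun w => gtil k χ g p (x - w)) := h3.comp_homeomorph (Homeomorph.subLeft x)
  exact locInt_kernel.integrable_smul_right_of_hasCompactSupport (by fun_prop) h4

theorem cauT_conv (χ : ℂ → ℂ) (g : Pt n → ℂ) : cauT k χ g =
    fun p => MeasureTheory.convolution ckK (gtil k χ g p) (ContinuousLinearMap.mul ℝ ℂ) MeasureTheory.volume (p.1 k) := by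
  ext p; rfl

theorem gt_zero {χ : ℂ → ℂ} {g : Pt n → ℂ} (p : Pt n) (y : ℂ) (hy : y ∉ tsupport χ) : gtil k χ g p y = 0 := by
  simp [gtil, image_eq_zero_of_notMem_tsupport hy]

theorem cauT_smooth (hA : ∀ j, IsOpen (A j)) (hG : IsOpen G) {χ : ℂ → ℂ} (hχ : Cut (A k) χ)
    {g : Pt n → ℂ} (hg : ContDiffOn ℝ (⊤ : ℕ∞) g (Om A G)) : ContDiffOn ℝ (⊤ : ℕ∞) (cauT k χ g) (Os k A G) := by
  rw [cauT_conv]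
  exact MeasureTheory.contDiffOn_convolution_right_with_param_comp _ (by fun_prop) (isOpen_Os hA hG) hχ.cpt
    (fun p x _ hx => gt_zero p x hx) locInt_kernel (gt_contDiffOn hA hG hχ le_rfl hg)

theorem cauT_fderiv0 (hA : ∀ j, IsOpen (A j)) (hG : IsOpen G) {χ : ℂ → ℂ} (hχ : Cut (A k) χ)
    {g : Pt n → ℂ} (hg : ContDiffOn ℝ (⊤ : ℕ∞) g (Om A G)) {p : Pt n} (hp : p ∈ Os k A G) (v : Pt n) :
    fderiv ℝ (cauT k χ g) p v = ∫ w, ckK w * (gtil k (fun y => fderiv ℝ χ y (v.1 k)) g p (p.1 k - w) + gtil k χ (fun x => fderiv ℝ g x v) p (p.1 k - w)) := by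
  have hg1 : ContDiffOn ℝ 1 g (Om A G) := hg.of_le (by simp)
  have hgt := gt_contDiffOn hA hG hχ (by simp) hg1
  have h1 := MeasureTheory.hasFDerivAt_convolution_right_with_param (ContinuousLinearMap.mul ℝ ℂ) (isOpen_Os hA hG) hχ.cpt
    (fun p x _ hx => gt_zero p x hx) locInt_kernel hgt (p, p.1 k) hp
  have h2 : HasFDerivAt (fun p : Pt n => (p, p.1 k)) ((ContinuousLinearMap.id ℝ (Pt n)).prod
      ((ContinuousLinearMap.proj (R := ℝ) (φ := fun _ : Fin n => ℂ) k).comp (ContinuousLinearMap.fst ℝ (Cn n) (Cn n)))) p :=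
    ContinuousLinearMap.hasFDerivAt ((ContinuousLinearMap.id ℝ (Pt n)).prod
      ((ContinuousLinearMap.proj (R := ℝ) (φ := fun _ : Fin n => ℂ) k).comp (ContinuousLinearMap.fst ℝ (Cn n) (Cn n))))
  have h3 := h1.comp p h2
  have h4 : cauT k χ g = (fun q : Pt n × ℂ => MeasureTheory.convolution ckK (gtil k χ g q.1) (ContinuousLinearMap.mul ℝ ℂ) MeasureTheory.volume q.2) ∘ (fun p : Pt n => (p, p.1 k)) := by
    ext p; rfl
  rw [h4]
  have h5 := h3.fderiv
  unfold ckK at *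
  rw [h5]
  rw [ContinuousLinearMap.comp_apply]
  have hcs : HasCompactSupport fun x : ℂ => fderiv ℝ (Function.HasUncurry.uncurry (gtil k χ g)) (p, x) := by
    refine HasCompactSupport.intro hχ.cpt fun y hy' => ?_
    have h3 := (notMem_tsupport_iff_eventuallyEq.1 hy')
    have h2 : (Function.HasUncurry.uncurry (gtil k χ g)) =ᶠ[nhds (p, y)] fun _ => 0 := by
      rw [gt_unc]
      have h4 : Filter.Tendsto Prod.snd (nhds (p, y)) (nhds y) := continuous_snd.continuousAt
      filter_upwards [h4.eventually h3] with a ha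
      simp [ha]
    rw [h2.fderiv_eq]; simp
  have hcont : Continuous fun x : ℂ => fderiv ℝ (Function.HasUncurry.uncurry (gtil k χ g)) (p, x) := by
    have := hgt.continuousOn_fderiv_of_isOpen ((isOpen_Os hA hG).prod isOpen_univ) le_rfl
    exact this.comp_continuous (f := fun y => (p, y)) (by fun_prop) fun y => ⟨hp, trivial⟩
  rw [MeasureTheory.convolution_precompR_apply _ locInt_kernel hcs hcont]
  unfold MeasureTheory.convolution
  refine MeasureTheory.integral_congr_ae (Filter.Eventually.of_forall fun w => ?_)
  have := gt_fderiv hA hG hχ hg1 hp (p.1 k - w) v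
  simp only [ContinuousLinearMap.mul_apply']
  rw [← this]
  rfl
end

/-- unified Wirtinger operator -/
def wop {n : ℕ} (i : Fin n) (σ : ℂ) (f : Pt n → ℂ) : Pt n → ℂ := fun p =>
  (1 / 2 : ℂ) * (fderiv ℝ f p ((Pi.single i 1 : Cn n), 0)
    + σ * fderiv ℝ f p ((Pi.single i Complex.I : Cn n), 0))

def bsig (b : Bool) : ℂ := if b then -I else I

def dop {n : ℕ} (d : Fin n × Bool) : (Pt n → ℂ) → Pt n → ℂ := wop d.1 (bsig d.2)

theorem dz_eq {n : ℕ} (i : Fin n) : dz i = dop (i, true) := by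
  ext f p; simp [dz, dop, wop, bsig]; ring

theorem dzbar_eq {n : ℕ} (i : Fin n) : dzbar i = dop (i, false) := by
  ext f p; simp [dzbar, dop, wop, bsig]

def dchi {n : ℕ} (k : Fin n) (d : Fin n × Bool) (χ : ℂ → ℂ) : ℂ → ℂ := fun y =>
  (1 / 2 : ℂ) * (fderiv ℝ χ y ((Pi.single d.1 1 : Cn n) k)
    + bsig d.2 * fderiv ℝ χ y ((Pi.single d.1 Complex.I : Cn n) k))

theorem Cut.const_mul {S : Set ℂ} {χ : ℂ → ℂ} (hχ : Cut S χ) (c : ℂ) : Cut S (fun y => c * χ y) := by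
  refine ⟨contDiff_const.mul hχ.smooth, hχ.cpt.mul_left, ?_⟩
  refine (closure_mono ?_).trans hχ.sub
  intro y hy
  simp only [Function.mem_support] at hy ⊢
  exact right_ne_zero_of_mul hy

theorem Cut.add {S : Set ℂ} {χ η : ℂ → ℂ} (hχ : Cut S χ) (hη : Cut S η) : Cut S (fun y => χ y + η y) := by
  refine ⟨hχ.smooth.add hη.smooth, hχ.cpt.add hη.cpt, ?_⟩
  exact (tsupport_add χ η).trans (Set.union_subset hχ.sub hη.sub)

theorem Cut.dchi {n : ℕ} {k : Fin n} {S : Set ℂ} {χ : ℂ → ℂ} (hχ : Cut S χ) (d : Fin n × Bool) : Cut S (dchi k d χ) :=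
  (((hχ.deriv _).add ((hχ.deriv _).const_mul _)).const_mul _)

section
variable {n : ℕ} {k : Fin n} {A : Fin n → Set ℂ} {G : Set (Cn n)}

theorem fderiv_smooth {Ω : Set (Pt n)} (hΩ : IsOpen Ω) {g : Pt n → ℂ} (hg : ContDiffOn ℝ (⊤ : ℕ∞) g Ω) (v : Pt n) :
    ContDiffOn ℝ (⊤ : ℕ∞) (fun x => fderiv ℝ g x v) Ω :=
  (hg.fderiv_of_isOpen (m := (⊤ : ℕ∞)) hΩ (by simp)).clm_apply contDiffOn_const

theorem wop_smooth {Ω : Set (Pt n)} (hΩ : IsOpen Ω) {g : Pt n → ℂ} (hg : ContDiffOn ℝ (⊤ : ℕ∞) g Ω) (i : Fin n) (σ : ℂ) :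
    ContDiffOn ℝ (⊤ : ℕ∞) (wop i σ g) Ω :=
  contDiffOn_const.mul ((fderiv_smooth hΩ hg _).add (contDiffOn_const.mul (fderiv_smooth hΩ hg _)))

theorem cauT_eq (χ : ℂ → ℂ) (g : Pt n → ℂ) (p : Pt n) :
    cauT k χ g p = ∫ w, ckK w * gtil k χ g p (p.1 k - w) := rfl

theorem cauT_fderiv (hA : ∀ j, IsOpen (A j)) (hG : IsOpen G) {χ : ℂ → ℂ} (hχ : Cut (A k) χ)
    {g : Pt n → ℂ} (hg : ContDiffOn ℝ (⊤ : ℕ∞) g (Om A G)) {p : Pt n} (hp : p ∈ Os k A G) (v : Pt n) :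
    fderiv ℝ (cauT k χ g) p v = cauT k (fun y => fderiv ℝ χ y (v.1 k)) g p + cauT k χ (fun x => fderiv ℝ g x v) p := by
  rw [cauT_fderiv0 hA hG hχ hg hp, cauT_eq, cauT_eq, ← MeasureTheory.integral_add]
  · simp only [mul_add]
  · exact cauT_integrable hA hG (hχ.deriv _) hg.continuousOn hp _
  · exact cauT_integrable hA hG hχ (fderiv_smooth (isOpen_Om hA hG) hg v).continuousOn hp _

theorem cauT_comb (hA : ∀ j, IsOpen (A j)) (hG : IsOpen G) {χ : ℂ → ℂ} (hχ : Cut (A k) χ)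
    {g h : Pt n → ℂ} (hg : ContinuousOn g (Om A G)) (hh : ContinuousOn h (Om A G)) {p : Pt n} (hp : p ∈ Os k A G) (a b : ℂ) :
    cauT k χ (fun x => a * (g x + b * h x)) p = a * (cauT k χ g p + b * cauT k χ h p) := by
  have h1 := cauT_integrable hA hG hχ hg hp (p.1 k)
  have h2 := cauT_integrable hA hG hχ hh hp (p.1 k)
  rw [cauT_eq, cauT_eq, cauT_eq, ← MeasureTheory.integral_const_mul b, ← MeasureTheory.integral_add h1 (h2.const_mul b),
    ← MeasureTheory.integral_const_mul]
  congr 1; ext w; simp only [gtil]; ring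

theorem cauT_comb' (hA : ∀ j, IsOpen (A j)) (hG : IsOpen G) {χ η : ℂ → ℂ} (hχ : Cut (A k) χ) (hη : Cut (A k) η)
    {g : Pt n → ℂ} (hg : ContinuousOn g (Om A G)) {p : Pt n} (hp : p ∈ Os k A G) (a b : ℂ) :
    cauT k (fun x => a * (χ x + b * η x)) g p = a * (cauT k χ g p + b * cauT k η g p) := by
  have h1 := cauT_integrable hA hG hχ hg hp (p.1 k)
  have h2 := cauT_integrable hA hG hη hg hp (p.1 k)
  rw [cauT_eq, cauT_eq, cauT_eq, ← MeasureTheory.integral_const_mul b, ← MeasureTheory.integral_add h1 (h2.const_mul b),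
    ← MeasureTheory.integral_const_mul]
  congr 1; ext w; simp only [gtil]; ring

theorem dop_cauT (hA : ∀ j, IsOpen (A j)) (hG : IsOpen G) {χ : ℂ → ℂ} (hχ : Cut (A k) χ)
    {g : Pt n → ℂ} (hg : ContDiffOn ℝ (⊤ : ℕ∞) g (Om A G)) {p : Pt n} (hp : p ∈ Os k A G) (d : Fin n × Bool) :
    dop d (cauT k χ g) p = cauT k (dchi k d χ) g p + cauT k χ (dop d g) p := by
  have e1 := cauT_comb' hA hG (hχ.deriv ((Pi.single d.1 1 : Cn n) k)) (hχ.deriv ((Pi.single d.1 I : Cn n) k)) hg.continuousOn hp (1/2) (bsig d.2)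
  have e2 := cauT_comb hA hG hχ (fderiv_smooth (isOpen_Om hA hG) hg ((Pi.single d.1 1 : Cn n), 0)).continuousOn
    (fderiv_smooth (isOpen_Om hA hG) hg ((Pi.single d.1 I : Cn n), 0)).continuousOn hp (1/2) (bsig d.2)
  change _ = cauT k (fun y => (1 / 2 : ℂ) * (fderiv ℝ χ y ((Pi.single d.1 1 : Cn n) k)
    + bsig d.2 * fderiv ℝ χ y ((Pi.single d.1 Complex.I : Cn n) k))) g p + cauT k χ (fun p => (1 / 2 : ℂ) * (fderiv ℝ g p ((Pi.single d.1 1 : Cn n), 0)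
    + bsig d.2 * fderiv ℝ g p ((Pi.single d.1 Complex.I : Cn n), 0))) p
  rw [e1, e2]
  simp only [dop, wop]
  rw [cauT_fderiv hA hG hχ hg hp, cauT_fderiv hA hG hχ hg hp]
  ring

theorem cauT_zero_of {χ : ℂ → ℂ} (hχ : Cut (A k) χ) {g : Pt n → ℂ} (hg : ∀ x ∈ Om A G, g x = 0) {p : Pt n} (hp : p ∈ Os k A G) :
    cauT k χ g p = 0 := by
  rw [cauT_eq]
  refine MeasureTheory.integral_eq_zero_of_ae (Filter.Eventually.of_forall fun w => ?_)
  simp only [gtil, Pi.zero_apply]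
  by_cases hy : p.1 k - w ∈ A k
  · rw [hg _ (upd_mem hp hy)]; simp
  · rw [image_eq_zero_of_notMem_tsupport (f := χ) fun h => hy (hχ.sub h)]; simp

theorem dop_cauT_ne (hA : ∀ j, IsOpen (A j)) (hG : IsOpen G) {χ : ℂ → ℂ} (hχ : Cut (A k) χ)
    {g : Pt n → ℂ} (hg : ContDiffOn ℝ (⊤ : ℕ∞) g (Om A G)) {p : Pt n} (hp : p ∈ Os k A G) (d : Fin n × Bool) (hd : d.1 ≠ k) :
    dop d (cauT k χ g) p = cauT k χ (dop d g) p := by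
  rw [dop_cauT hA hG hχ hg hp]
  have : dchi k d χ = fun _ => 0 := by
    ext y; simp [dchi, Pi.single_eq_of_ne hd.symm]
  rw [this]
  simp [cauT]

theorem dzbar_cauT (hA : ∀ j, IsOpen (A j)) (hG : IsOpen G) {χ : ℂ → ℂ} (hχ : Cut (A k) χ)
    {g : Pt n → ℂ} (hg : ContDiffOn ℝ (⊤ : ℕ∞) g (Om A G)) {p : Pt n} (hp : p ∈ Os k A G) :
    dop (k, false) (cauT k χ g) p = χ (p.1 k) * g p := by
  have hg1 : ContDiffOn ℝ 1 g (Om A G) := hg.of_le (by simp)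
  have hgt := gt_contDiffOn hA hG hχ (by simp) hg1
  have hφ : ContDiff ℝ 1 (gtil k χ g p) := by
    rw [← contDiffOn_univ]
    refine hgt.comp (f := fun y => (p, y)) (by fun_prop) fun y _ => ⟨hp, trivial⟩
  have h3 : HasCompactSupport (gtil k χ g p) := hχ.cpt.mul_right
  have key : ∀ y a : ℂ, fderiv ℝ (gtil k χ g p) y a =
      gtil k (fun y => fderiv ℝ χ y a) g p y + gtil k χ (fun x => fderiv ℝ g x (Pi.single k a, 0)) p y := by
    intro y a
    have hx : updL k (p, y) ∈ Os k A G := by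
      rw [updL_apply]
      exact ⟨fun j hj => by simpa [hj] using hp.1 j hj, hp.2⟩
    have e0 : ∀ (χ : ℂ → ℂ) (g : Pt n → ℂ) y y', gtil k χ g (updL k (p, y')) y = gtil k χ g p y := by
      intro χ g y y'; rw [updL_apply]; simp [gtil]
    have e1 : gtil k χ g p = (Function.HasUncurry.uncurry (gtil k χ g)) ∘ fun y => (updL k (p, y), y) := by
      ext y; exact (e0 χ g y y).symm
    have e2 : updL k ((0 : Pt n), a) = (Pi.single k a, 0) := by rw [updL_apply]; rfl
    have h2 : HasFDerivAt (fun y : ℂ => (updL k (p, y), y)) (((updL k).comp (ContinuousLinearMap.inr ℝ (Pt n) ℂ)).prod (ContinuousLinearMap.id ℝ ℂ)) y := by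
      refine HasFDerivAt.prodMk ?_ (hasFDerivAt_id y)
      exact (updL k).hasFDerivAt.comp y (hasFDerivAt_prodMk_right p y)
    have h4 := (hgt.contDiffAt (((isOpen_Os hA hG).prod isOpen_univ).mem_nhds (x := (updL k (p, y), y)) ⟨hx, trivial⟩)).differentiableAt (by norm_num)
    have h5 := HasFDerivAt.comp (f := fun y : ℂ => (updL k (p, y), y)) y h4.hasFDerivAt h2
    rw [← e1] at h5
    rw [h5.fderiv]
    have h6 := gt_fderiv hA hG hχ hg1 hx y (Pi.single k a, 0)
    rw [e0, e0] at h6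
    simp only [Pi.single_eq_same] at h6
    rw [← h6]
    simp [e2]
  have h7 := pompeiu (gtil k χ g p) hφ h3 (p.1 k)
  have h8 : gtil k χ g p (p.1 k) = χ (p.1 k) * g p := by simp [gtil]
  rw [← h8, ← h7, dop_cauT hA hG hχ hg hp, cauT_eq, cauT_eq, ← MeasureTheory.integral_add]
  · congr 1; ext w
    simp only [key, gtil, dchi, dop, wop, bsig, Pi.single_eq_same, ckK, if_false, Bool.false_eq_true]
    ring
  · exact cauT_integrable hA hG (hχ.dchi _) hg.continuousOn hp _
  · exact cauT_integrable hA hG hχ (wop_smooth (isOpen_Om hA hG) hg _ _).continuousOn hp _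

theorem cauT_bound {χ : ℂ → ℂ} (hχ : Cut (A k) χ) (hb : Bornology.IsBounded (A k)) :
    ∃ M : ℝ, 0 < M ∧ ∀ (g : Pt n → ℂ) (p : Pt n) (B : ℝ), p ∈ Om A G → 0 ≤ B → 
      (∀ y ∈ A k, ‖g (Function.update p.1 k y, p.2)‖ ≤ B) → ‖cauT k χ g p‖ ≤ M * B := by
  obtain ⟨R, hR⟩ := hb.exists_norm_le
  obtain ⟨C, hC⟩ := hχ.smooth.continuous.bounded_above_of_compact_support hχ.cpt
  have hC0 : 0 ≤ C := (norm_nonneg _).trans (hC 0)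
  have hKi : MeasureTheory.IntegrableOn (fun w => ‖ckK w‖) (Metric.closedBall (0:ℂ) (2 * R)) :=
    (locInt_kernel.integrableOn_isCompact (isCompact_closedBall _ _)).norm
  have hI0 : 0 ≤ ∫ w in Metric.closedBall (0:ℂ) (2 * R), ‖ckK w‖ :=
    MeasureTheory.integral_nonneg fun _ => norm_nonneg _
  refine ⟨C * (∫ w in Metric.closedBall (0:ℂ) (2 * R), ‖ckK w‖) + 1, by positivity, fun g p B hp hB h => ?_⟩
  have h1 : ‖cauT k χ g p‖ ≤ ∫ w, (Metric.closedBall (0:ℂ) (2 * R)).indicator (fun w => ‖ckK w‖ * (C * B)) w := by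
    refine MeasureTheory.norm_integral_le_of_norm_le ?_ (Filter.Eventually.of_forall fun w => ?_)
    · exact (MeasureTheory.integrable_indicator_iff Metric.isClosed_closedBall.measurableSet).2 (hKi.mul_const _)
    · by_cases hy : p.1 k - w ∈ A k
      · have hw : w ∈ Metric.closedBall (0:ℂ) (2 * R) := by
          rw [mem_closedBall_zero_iff]
          have := norm_sub_le (p.1 k) (p.1 k - w)
          rw [sub_sub_cancel] at this
          linarith [hR _ hy, hR _ (hp.1 k)]
        rw [Set.indicator_of_mem hw, norm_mul, norm_mul]
        gcongr
        · exact hC _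
        · exact h _ hy
      · rw [image_eq_zero_of_notMem_tsupport (f := χ) fun h => hy (hχ.sub h)]
        simp only [zero_mul, mul_zero, norm_zero]
        exact Set.indicator_nonneg (fun _ _ => by positivity) _
  refine h1.trans ?_
  rw [MeasureTheory.integral_indicator Metric.isClosed_closedBall.measurableSet, MeasureTheory.integral_mul_const]
  nlinarith
end

section
variable {n : ℕ} {Ω : Set (Pt n)}

theorem sec_symm (hΩ : IsOpen Ω) {g : Pt n → ℂ} (hg : ContDiffOn ℝ (⊤ : ℕ∞) g Ω) {x : Pt n} (hx : x ∈ Ω) (u v : Pt n) :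
    fderiv ℝ (fun y => fderiv ℝ g y u) x v = fderiv ℝ (fun y => fderiv ℝ g y v) x u := by
  have h1 : ContDiffAt ℝ (⊤ : ℕ∞) g x := hg.contDiffAt (hΩ.mem_nhds hx)
  have h2 : DifferentiableAt ℝ (fderiv ℝ g) x :=
    (h1.fderiv_right (m := (⊤ : ℕ∞)) (by simp)).differentiableAt (by simp)
  have h3 : ∀ u v, fderiv ℝ (fun y => fderiv ℝ g y u) x v = fderiv ℝ (fderiv ℝ g) x v u := by
    intro u v
    have := h2.hasFDerivAt.clm_apply (hasFDerivAt_const u x)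
    rw [this.fderiv]; simp
  rw [h3, h3]
  exact (h1.of_le (m := 2) (WithTop.coe_le_coe.2 (le_top : (2 : ℕ∞) ≤ ⊤))).isSymmSndFDerivAt (by simp) v u

theorem fd_diff (hΩ : IsOpen Ω) {g : Pt n → ℂ} (hg : ContDiffOn ℝ (⊤ : ℕ∞) g Ω) {x : Pt n} (hx : x ∈ Ω) :
    DifferentiableAt ℝ g x :=
  (hg.contDiffAt (hΩ.mem_nhds hx)).differentiableAt (by simp)

theorem fderiv_comb (hΩ : IsOpen Ω) {f g : Pt n → ℂ} (hf : ContDiffOn ℝ (⊤ : ℕ∞) f Ω) (hg : ContDiffOn ℝ (⊤ : ℕ∞) g Ω)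
    {x : Pt n} (hx : x ∈ Ω) (a b : ℂ) (u : Pt n) :
    fderiv ℝ (fun y => a * (f y + b * g y)) x u = a * (fderiv ℝ f x u + b * fderiv ℝ g x u) := by
  have h1 := (fd_diff hΩ hf hx).hasFDerivAt
  have h2 := (fd_diff hΩ hg hx).hasFDerivAt
  have h3 : HasFDerivAt (fun y => a * (f y + b * g y)) _ x := (h1.add (h2.const_mul b)).const_mul a
  rw [h3.fderiv]; simp [mul_add]

theorem fderiv_wop (hΩ : IsOpen Ω) {g : Pt n → ℂ} (hg : ContDiffOn ℝ (⊤ : ℕ∞) g Ω) {x : Pt n} (hx : x ∈ Ω) (i : Fin n) (σ : ℂ) (u : Pt n) :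
    fderiv ℝ (wop i σ g) x u = (1/2) * (fderiv ℝ (fun y => fderiv ℝ g y (Pi.single i 1, 0)) x u + σ * fderiv ℝ (fun y => fderiv ℝ g y (Pi.single i I, 0)) x u) :=
  fderiv_comb hΩ (fderiv_smooth hΩ hg _) (fderiv_smooth hΩ hg _) hx _ _ _

theorem dop_smooth (hΩ : IsOpen Ω) {g : Pt n → ℂ} (hg : ContDiffOn ℝ (⊤ : ℕ∞) g Ω) (d : Fin n × Bool) :
    ContDiffOn ℝ (⊤ : ℕ∞) (dop d g) Ω := wop_smooth hΩ hg _ _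

theorem dop_congr (hΩ : IsOpen Ω) {f g : Pt n → ℂ} (h : Set.EqOn f g Ω) (d : Fin n × Bool) : Set.EqOn (dop d f) (dop d g) Ω := by
  intro x hx
  have : f =ᶠ[nhds x] g := by filter_upwards [hΩ.mem_nhds hx] with y hy using h hy
  simp only [dop, wop, this.fderiv_eq]

theorem dop_comm (hΩ : IsOpen Ω) {g : Pt n → ℂ} (hg : ContDiffOn ℝ (⊤ : ℕ∞) g Ω) (d e : Fin n × Bool) :
    Set.EqOn (dop d (dop e g)) (dop e (dop d g)) Ω := by
  intro x hx
  have h : ∀ i σ j τ, wop i σ (wop j τ g) x = (1/4) * (fderiv ℝ (fun y => fderiv ℝ g y (Pi.single j 1, 0)) x (Pi.single i 1, 0)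
     + τ * fderiv ℝ (fun y => fderiv ℝ g y (Pi.single j I, 0)) x (Pi.single i 1, 0)
     + σ * fderiv ℝ (fun y => fderiv ℝ g y (Pi.single j 1, 0)) x (Pi.single i I, 0)
     + σ * τ * fderiv ℝ (fun y => fderiv ℝ g y (Pi.single j I, 0)) x (Pi.single i I, 0)) := by
    intro i σ j τ
    conv_lhs => unfold wop
    have := fun u => fderiv_wop hΩ hg hx j τ u
    unfold wop at this
    rw [this, this]; ring
  simp only [dop]
  rw [h, h, sec_symm hΩ hg hx (Pi.single e.1 1, 0), sec_symm hΩ hg hx (Pi.single e.1 1, 0) (Pi.single d.1 I, 0),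
    sec_symm hΩ hg hx (Pi.single e.1 I, 0), sec_symm hΩ hg hx (Pi.single e.1 I, 0) (Pi.single d.1 I, 0)]
  ring

theorem dop_comb (hΩ : IsOpen Ω) {f g : Pt n → ℂ} (hf : ContDiffOn ℝ (⊤ : ℕ∞) f Ω) (hg : ContDiffOn ℝ (⊤ : ℕ∞) g Ω) (a b : ℂ) (d : Fin n × Bool) :
    Set.EqOn (dop d (fun y => a * (f y + b * g y))) (fun y => a * (dop d f y + b * dop d g y)) Ω := by
  intro x hx
  simp only [dop, wop]
  rw [fderiv_comb hΩ hf hg hx, fderiv_comb hΩ hf hg hx]; ring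

/-- iterated derivative along a word -/
def Dw (w : List (Fin n × Bool)) (f : Pt n → ℂ) : Pt n → ℂ := w.foldr (fun d g => dop d g) f

theorem Dw_append (w v : List (Fin n × Bool)) (f : Pt n → ℂ) : Dw (w ++ v) f = Dw w (Dw v f) := by
  simp [Dw]

theorem Dw_smooth (hΩ : IsOpen Ω) {g : Pt n → ℂ} (hg : ContDiffOn ℝ (⊤ : ℕ∞) g Ω) (w : List (Fin n × Bool)) :
    ContDiffOn ℝ (⊤ : ℕ∞) (Dw w g) Ω := by
  induction w with
  | nil => exact hg
  | cons d w ih => exact dop_smooth hΩ ih d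

theorem Dw_congr (hΩ : IsOpen Ω) {f g : Pt n → ℂ} (h : Set.EqOn f g Ω) (w : List (Fin n × Bool)) : Set.EqOn (Dw w f) (Dw w g) Ω := by
  induction w with
  | nil => exact h
  | cons d w ih => exact dop_congr hΩ ih d

theorem Dw_comb (hΩ : IsOpen Ω) {f g : Pt n → ℂ} (hf : ContDiffOn ℝ (⊤ : ℕ∞) f Ω) (hg : ContDiffOn ℝ (⊤ : ℕ∞) g Ω) (a b : ℂ) (w : List (Fin n × Bool)) :
    Set.EqOn (Dw w (fun y => a * (f y + b * g y))) (fun y => a * (Dw w f y + b * Dw w g y)) Ω := by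
  induction w with
  | nil => intro x _; rfl
  | cons d w ih =>
    exact (dop_congr hΩ ih d).trans (dop_comb hΩ (Dw_smooth hΩ hf w) (Dw_smooth hΩ hg w) a b d)

theorem Dw_perm (hΩ : IsOpen Ω) {g : Pt n → ℂ} (hg : ContDiffOn ℝ (⊤ : ℕ∞) g Ω) {w v : List (Fin n × Bool)} (h : w.Perm v) :
    Set.EqOn (Dw w g) (Dw v g) Ω := by
  induction h with
  | nil => intro x _; rfl
  | cons d _ ih => exact dop_congr hΩ ih d
  | swap d e l => exact dop_comm hΩ (Dw_smooth hΩ hg l) _ _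
  | trans _ _ h1 h2 => exact h1.trans h2

def wdl (b : Bool) (α : Fin n → ℕ) : List (Fin n × Bool) := (List.ofFn fun i => List.replicate (α i) (i, b)).flatten

theorem Dw_replicate (d : Fin n × Bool) (m : ℕ) (f : Pt n → ℂ) : Dw (List.replicate m d) f = (dop d)^[m] f := by
  induction m with
  | zero => rfl
  | succ m ih => rw [Function.iterate_succ_apply', ← ih]; rfl

theorem Dw_flatten (L : List (List (Fin n × Bool))) (f : Pt n → ℂ) :
    Dw L.flatten f = (L.map Dw).foldr (fun d g => d g) f := by
  induction L with
  | nil => rfl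
  | cons w L ih => simp [Dw_append, ih]

theorem mixedDeriv_eq (α β : Fin n → ℕ) (f : Pt n → ℂ) : mixedDeriv α β f = Dw (wdl true α ++ wdl false β) f := by
  unfold mixedDeriv wdl
  rw [← List.flatten_append, Dw_flatten, List.map_append, List.map_ofFn, List.map_ofFn]
  congr 3
  · ext i f : 2; rw [Function.comp_apply, Dw_replicate, dz_eq]
  · ext i f : 2; rw [Function.comp_apply, Dw_replicate, dzbar_eq]

theorem count_wdl (b : Bool) (α : Fin n → ℕ) (i : Fin n) (c : Bool) :
    (wdl b α).count (i, c) = if b = c then α i else 0 := by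
  unfold wdl
  rw [List.count_flatten, List.map_ofFn, List.sum_ofFn]
  simp only [Function.comp_apply, List.count_replicate]
  by_cases h : b = c
  · subst h; simp
  · simp [h]

theorem word_perm (w : List (Fin n × Bool)) :
    w.Perm (wdl true (fun i => w.count (i, true)) ++ wdl false (fun i => w.count (i, false))) := by
  rw [List.perm_iff_count]
  rintro ⟨i, b⟩
  rw [List.count_append, count_wdl, count_wdl]
  cases b <;> simp
end

section
variable {n : ℕ}

theorem cauT_congr {k : Fin n} {A : Fin n → Set ℂ} {G : Set (Cn n)} {χ : ℂ → ℂ} (hχ : Cut (A k) χ) {f g : Pt n → ℂ}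
    (hg : ∀ x ∈ Om A G, f x = g x) {p : Pt n} (hp : p ∈ Os k A G) :
    cauT k χ f p = cauT k χ g p := by
  rw [cauT_eq, cauT_eq]
  congr 1; ext w
  simp only [gtil]
  by_cases hy : p.1 k - w ∈ A k
  · rw [hg _ (upd_mem hp hy)]
  · rw [image_eq_zero_of_notMem_tsupport (f := χ) fun h => hy (hχ.sub h)]; simp

/-- one-word bound -/
def BD1 (Ω' : Set (Pt n)) (g : Pt n → ℂ) : Prop :=
  ∃ h C : ℝ, 0 < h ∧ 0 < C ∧ ∀ p ∈ Ω', ‖g p‖ ≤ C * Real.exp (-h * eucNorm p.2)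

/-- all derivatives decay -/
def BD (Ω' : Set (Pt n)) (g : Pt n → ℂ) : Prop := ∀ w, BD1 Ω' (Dw w g)

theorem BD1.congr {Ω' : Set (Pt n)} {f g : Pt n → ℂ} (h : BD1 Ω' f) (he : Set.EqOn g f Ω') : BD1 Ω' g := by
  obtain ⟨r, C, hr, hC, hb⟩ := h
  exact ⟨r, C, hr, hC, fun p hp => by rw [he hp]; exact hb p hp⟩

theorem BD1.mono {Ω' Ω'' : Set (Pt n)} {f : Pt n → ℂ} (h : BD1 Ω' f) (he : Ω'' ⊆ Ω') : BD1 Ω'' f := by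
  obtain ⟨r, C, hr, hC, hb⟩ := h
  exact ⟨r, C, hr, hC, fun p hp => hb p (he hp)⟩

theorem BD1.comb {Ω' : Set (Pt n)} {f g : Pt n → ℂ} (hf : BD1 Ω' f) (hg : BD1 Ω' g) (a b : ℂ) :
    BD1 Ω' (fun y => a * (f y + b * g y)) := by
  obtain ⟨r, C, hr, hC, hb⟩ := hf
  obtain ⟨r', C', hr', hC', hb'⟩ := hg
  refine ⟨min r r', (‖a‖ + 1) * (C + (‖b‖ + 1) * C'), lt_min hr hr', by positivity, fun p hp => ?_⟩
  have he : 0 ≤ eucNorm p.2 := Real.sqrt_nonneg _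
  have e1 : Real.exp (-r * eucNorm p.2) ≤ Real.exp (-(min r r') * eucNorm p.2) := by
    gcongr; exact min_le_left _ _
  have e2 : Real.exp (-r' * eucNorm p.2) ≤ Real.exp (-(min r r') * eucNorm p.2) := by
    gcongr; exact min_le_right _ _
  calc ‖a * (f p + b * g p)‖ ≤ ‖a‖ * (‖f p‖ + ‖b‖ * ‖g p‖) := by
        rw [norm_mul, ← norm_mul b]; gcongr; exact norm_add_le _ _
    _ ≤ (‖a‖ + 1) * (C * Real.exp (-(min r r') * eucNorm p.2) + (‖b‖ + 1) * (C' * Real.exp (-(min r r') * eucNorm p.2))) := by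
        gcongr
        · linarith
        · exact (hb p hp).trans (by gcongr)
        · linarith
        · exact (hb' p hp).trans (by gcongr)
    _ = _ := by ring

theorem BD.comb {Ω Ω' : Set (Pt n)} (hΩ : IsOpen Ω) (hs : Ω' ⊆ Ω) {f g : Pt n → ℂ} (hf : ContDiffOn ℝ (⊤ : ℕ∞) f Ω)
    (hg : ContDiffOn ℝ (⊤ : ℕ∞) g Ω) (h1 : BD Ω' f) (h2 : BD Ω' g) (a b : ℂ) :
    BD Ω' (fun y => a * (f y + b * g y)) :=
  fun w => ((h1 w).comb (h2 w) a b).congr ((Dw_comb hΩ hf hg a b w).mono hs)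

theorem BD.dop {Ω' : Set (Pt n)} {f : Pt n → ℂ} (h : BD Ω' f) (d : Fin n × Bool) : BD Ω' (dop d f) := by
  intro w
  have := h (w ++ [d])
  rwa [Dw_append] at this

theorem BD.mono {Ω' Ω'' : Set (Pt n)} {f : Pt n → ℂ} (h : BD Ω' f) (he : Ω'' ⊆ Ω') : BD Ω'' f :=
  fun w => (h w).mono he

theorem Dw_cauT {k : Fin n} {A : Fin n → Set ℂ} {G S : Set (Cn n)} (hA : ∀ j, IsOpen (A j)) (hG : IsOpen G)
    (hb : Bornology.IsBounded (A k)) (hS : S ⊆ G) (w : List (Fin n × Bool)) :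
    ∀ (χ : ℂ → ℂ) (g : Pt n → ℂ), Cut (A k) χ → ContDiffOn ℝ (⊤ : ℕ∞) g (Om A G) → BD (Om A S) g →
      BD1 (Om A S) (Dw w (cauT k χ g)) := by
  have hΩ := isOpen_Om hA hG
  have hsub : Om A S ⊆ Om A G := fun p hp => ⟨hp.1, hS hp.2⟩
  have hsm : ∀ (χ : ℂ → ℂ) (g : Pt n → ℂ), Cut (A k) χ → ContDiffOn ℝ (⊤ : ℕ∞) g (Om A G) →
      ContDiffOn ℝ (⊤ : ℕ∞) (cauT k χ g) (Om A G) := fun χ g hχ hg => (cauT_smooth hA hG hχ hg).mono Om_sub_Os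
  induction w using List.reverseRecOn with
  | nil =>
    intro χ g hχ hg hbd
    obtain ⟨M, hM, hMb⟩ := cauT_bound (G := S) hχ hb
    obtain ⟨r, C, hr, hC, hbd⟩ := hbd []
    refine ⟨r, M * C, hr, by positivity, fun p hp => ?_⟩
    rw [mul_assoc]
    exact hMb g p _ hp (by positivity) fun y hy => hbd _ (upd_mem (Om_sub_Os hp) hy)
  | append_singleton w d ih =>
    intro χ g hχ hg hbd
    have hd := dop_smooth hΩ hg d
    have h1 := ih _ g (hχ.dchi (k := k) d) hg hbd
    have h2 := ih χ _ hχ hd (hbd.dop d)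
    have e0 : Set.EqOn (dop d (cauT k χ g)) (fun p => 1 * (cauT k (dchi k d χ) g p + 1 * cauT k χ (dop d g) p)) (Om A G) := by
      intro p hp
      simp only [one_mul]
      exact dop_cauT hA hG hχ hg (Om_sub_Os hp) d
    rw [Dw_append]
    refine (h1.comb h2 1 1).congr ?_
    refine Set.EqOn.trans ((Dw_congr hΩ e0 w).mono hsub) ?_
    exact (Dw_comb hΩ (hsm _ _ (hχ.dchi d) hg) (hsm _ _ hχ hd) 1 1 w).mono hsub

/-- truncated cone over `K` -/
def SK (K : Set (Cn n)) (δ : ℝ) : Set (Cn n) := {ζ | (∃ t : ℝ, 0 < t ∧ ∃ κ ∈ K, ζ = t • κ) ∧ δ < ‖ζ‖}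

structure Cls (Γ G : Set (Cn n)) (A : Fin n → Set ℂ) (g : Pt n → ℂ) : Prop where
  smooth : ContDiffOn ℝ (⊤ : ℕ∞) g (Om A G)
  holo : ∀ x ∈ Om A G, ∀ v : Cn n, fderiv ℝ g x (0, I • v) = I * fderiv ℝ g x (0, v)
  bd : ∀ K, IsCompact K → K ⊆ Γ → ∃ δ, BD (Om A (G ∩ SK K δ)) g

variable {Γ G : Set (Cn n)} {A : Fin n → Set ℂ}

theorem SK_anti {K : Set (Cn n)} {δ δ' : ℝ} (h : δ ≤ δ') : SK K δ' ⊆ SK K δ := fun _ hx => ⟨hx.1, h.trans_lt hx.2⟩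

theorem Om_mono {A' : Fin n → Set ℂ} {G' : Set (Cn n)} (h : ∀ j, A' j ⊆ A j) (h' : G' ⊆ G) : Om A' G' ⊆ Om A G :=
  fun _ hp => ⟨fun j => h j (hp.1 j), h' hp.2⟩

theorem Cls.mono {A' : Fin n → Set ℂ} {g : Pt n → ℂ} (hg : Cls Γ G A g) (h : ∀ j, A' j ⊆ A j) : Cls Γ G A' g := by
  refine ⟨hg.smooth.mono (Om_mono h le_rfl), fun x hx => hg.holo x (Om_mono h le_rfl hx), fun K hK hK' => ?_⟩
  obtain ⟨δ, hδ⟩ := hg.bd K hK hK'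
  exact ⟨δ, hδ.mono (Om_mono h le_rfl)⟩

theorem Cls.comb (hA : ∀ j, IsOpen (A j)) (hG : IsOpen G) {f g : Pt n → ℂ} (hf : Cls Γ G A f) (hg : Cls Γ G A g) (a b : ℂ) :
    Cls Γ G A (fun y => a * (f y + b * g y)) := by
  have hΩ := isOpen_Om hA hG
  refine ⟨contDiffOn_const.mul (hf.smooth.add (contDiffOn_const.mul hg.smooth)), fun x hx v => ?_, fun K hK hK' => ?_⟩
  · rw [fderiv_comb hΩ hf.smooth hg.smooth hx, fderiv_comb hΩ hf.smooth hg.smooth hx, hf.holo x hx, hg.holo x hx]; ring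
  · obtain ⟨δ, hδ⟩ := hf.bd K hK hK'
    obtain ⟨δ', hδ'⟩ := hg.bd K hK hK'
    refine ⟨max δ δ', BD.comb hΩ (Om_mono (fun _ => le_rfl) Set.inter_subset_left) hf.smooth hg.smooth (hδ.mono ?_) (hδ'.mono ?_) a b⟩
    · exact Om_mono (fun _ => le_rfl) (Set.inter_subset_inter_right _ (SK_anti (le_max_left _ _)))
    · exact Om_mono (fun _ => le_rfl) (Set.inter_subset_inter_right _ (SK_anti (le_max_right _ _)))

theorem Cls.zero : Cls Γ G A (fun _ => 0) := by
  refine ⟨contDiffOn_const, fun x _ v => by simp, fun K _ _ => ⟨0, fun w => ?_⟩⟩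
  have : Dw w (fun _ : Pt n => (0:ℂ)) = fun _ => 0 := by
    induction w with
    | nil => rfl
    | cons d w ih =>
      show dop d (Dw w _) = _
      rw [ih]; ext p; simp [_root_.dop, wop]
  rw [this]
  exact ⟨1, 1, one_pos, one_pos, fun p _ => by simp; positivity⟩

theorem Cls.add (hA : ∀ j, IsOpen (A j)) (hG : IsOpen G) {f g : Pt n → ℂ} (hf : Cls Γ G A f) (hg : Cls Γ G A g) :
    Cls Γ G A (fun y => f y + g y) := by simpa using hf.comb hA hG hg 1 1

theorem Cls.sub (hA : ∀ j, IsOpen (A j)) (hG : IsOpen G) {f g : Pt n → ℂ} (hf : Cls Γ G A f) (hg : Cls Γ G A g) :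
    Cls Γ G A (fun y => f y - g y) := by simpa [sub_eq_add_neg] using hf.comb hA hG hg 1 (-1)

theorem Cls.const_mul (hA : ∀ j, IsOpen (A j)) (hG : IsOpen G) {f : Pt n → ℂ} (hf : Cls Γ G A f) (a : ℂ) :
    Cls Γ G A (fun y => a * f y) := by simpa using hf.comb hA hG Cls.zero a 0

theorem Cls.sum (hA : ∀ j, IsOpen (A j)) (hG : IsOpen G) {ι : Type*} (s : Finset ι) {f : ι → Pt n → ℂ} (hf : ∀ i ∈ s, Cls Γ G A (f i)) :
    Cls Γ G A (fun y => ∑ i ∈ s, f i y) := by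
  classical
  induction s using Finset.induction_on with
  | empty => simpa using Cls.zero
  | insert i s hi ih =>
    simp only [Finset.sum_insert hi]
    exact (hf i (by simp)).add hA hG (ih fun j hj => hf j (by simp [hj]))

theorem Cls.dop (hA : ∀ j, IsOpen (A j)) (hG : IsOpen G) {f : Pt n → ℂ} (hf : Cls Γ G A f) (d : Fin n × Bool) :
    Cls Γ G A (dop d f) := by
  have hΩ := isOpen_Om hA hG
  refine ⟨dop_smooth hΩ hf.smooth d, fun x hx v => ?_, fun K hK hK' => ?_⟩
  · have key : ∀ u, fderiv ℝ (fun y => fderiv ℝ f y u) x (0, I • v) = I * fderiv ℝ (fun y => fderiv ℝ f y u) x (0, v) := by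
      intro u
      rw [sec_symm hΩ hf.smooth hx, sec_symm hΩ hf.smooth hx u (0, v)]
      have h1 : (fun y => fderiv ℝ f y (0, I • v)) =ᶠ[nhds x] fun y => I * fderiv ℝ f y (0, v) := by
        filter_upwards [hΩ.mem_nhds hx] with y hy using hf.holo y hy v
      rw [h1.fderiv_eq]
      have := ((fd_diff hΩ (fderiv_smooth hΩ hf.smooth (0, v)) hx).hasFDerivAt.const_mul I)
      rw [this.fderiv]; simp
    simp only [_root_.dop]
    rw [fderiv_wop hΩ hf.smooth hx, fderiv_wop hΩ hf.smooth hx, key, key]; ring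
  · obtain ⟨δ, hδ⟩ := hf.bd K hK hK'
    exact ⟨δ, hδ.dop d⟩

theorem Cls.cauT (hA : ∀ j, IsOpen (A j)) (hG : IsOpen G) {k : Fin n} (hb : Bornology.IsBounded (A k))
    {χ : ℂ → ℂ} (hχ : Cut (A k) χ) {f : Pt n → ℂ} (hf : Cls Γ G A f) :
    Cls Γ G A (cauT k χ f) := by
  have hΩ := isOpen_Om hA hG
  refine ⟨(cauT_smooth hA hG hχ hf.smooth).mono Om_sub_Os, fun x hx v => ?_, fun K hK hK' => ?_⟩
  · have hx' : x ∈ Os k A G := Om_sub_Os hx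
    rw [cauT_fderiv hA hG hχ hf.smooth hx', cauT_fderiv hA hG hχ hf.smooth hx']
    have h0 : _root_.cauT k (fun y => (0:ℂ)) f x = 0 := by simp [_root_.cauT]
    simp only [Pi.zero_apply, map_zero, h0, zero_add]
    rw [cauT_congr hχ (g := fun y => I * (fderiv ℝ f y (0, v) + 0 * fderiv ℝ f y (0, v))) (fun y hy => by rw [hf.holo y hy]; ring) hx',
      cauT_comb hA hG hχ (fderiv_smooth hΩ hf.smooth _).continuousOn (fderiv_smooth hΩ hf.smooth _).continuousOn hx']
    ring
  · obtain ⟨δ, hδ⟩ := hf.bd K hK hK'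
    exact ⟨δ, fun w => Dw_cauT hA hG hb Set.inter_subset_left w χ f hχ hf.smooth hδ⟩
end

section
variable {n : ℕ}

def sg (k : Fin n) (S : Finset (Fin n)) : ℂ := (-1) ^ (S.filter (fun j => j < k)).card

def db (F : Finset (Fin n) → Pt n → ℂ) (S : Finset (Fin n)) (x : Pt n) : ℂ :=
  ∑ k ∈ S, sg k S * dop (k, false) (F (S.erase k)) x

theorem sg_sq (k : Fin n) (S : Finset (Fin n)) : sg k S * sg k S = 1 := by
  rw [sg, ← pow_add, ← two_mul, pow_mul]; simp

theorem sg_erase_of_not {k i : Fin n} (S : Finset (Fin n)) (h : ¬ i < k) : sg k (S.erase i) = sg k S := by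
  unfold sg
  congr 2
  ext j; simp only [Finset.mem_filter, Finset.mem_erase]
  constructor
  · rintro ⟨⟨_, h1⟩, h2⟩; exact ⟨h1, h2⟩
  · rintro ⟨h1, h2⟩; exact ⟨⟨fun e => h (e ▸ h2), h1⟩, h2⟩

theorem sg_erase_of_lt {k i : Fin n} {S : Finset (Fin n)} (hi : i ∈ S) (h : i < k) : sg k S = - sg k (S.erase i) := by
  unfold sg
  rw [Finset.filter_erase, ← Finset.card_erase_add_one (a := i) (s := S.filter (fun j => j < k)) (by simp [hi, h]), pow_succ]
  ring

theorem sg_anti {k i : Fin n} {S : Finset (Fin n)} (hk : k ∈ S) (hi : i ∈ S) (h : k ≠ i) :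
    sg k S * sg i (S.erase k) = - (sg i S * sg k (S.erase i)) := by
  rcases lt_or_gt_of_ne h with h | h
  · rw [sg_erase_of_lt hk h, sg_erase_of_not S (not_lt.2 h.le)]; ring
  · rw [sg_erase_of_lt hi h, sg_erase_of_not S (not_lt.2 h.le)]; ring

theorem dop_zero (d : Fin n × Bool) (x : Pt n) : dop d (fun _ => (0:ℂ)) x = 0 := by
  simp [dop, wop]

variable {Ω : Set (Pt n)}

theorem dop_sum (hΩ : IsOpen Ω) {ι : Type*} (s : Finset ι) (a : ι → ℂ) {g : ι → Pt n → ℂ}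
    (hg : ∀ i ∈ s, ContDiffOn ℝ (⊤ : ℕ∞) (g i) Ω) (d : Fin n × Bool) {x : Pt n} (hx : x ∈ Ω) :
    dop d (fun y => ∑ i ∈ s, a i * g i y) x = ∑ i ∈ s, a i * dop d (g i) x := by
  have h1 : ∀ u, fderiv ℝ (fun y => ∑ i ∈ s, a i * g i y) x u = ∑ i ∈ s, a i * fderiv ℝ (g i) x u := by
    intro u
    have : HasFDerivAt (fun y => ∑ i ∈ s, a i * g i y) (∑ i ∈ s, a i • fderiv ℝ (g i) x) x :=
      HasFDerivAt.fun_sum fun i hi => (fd_diff hΩ (hg i hi) hx).hasFDerivAt.const_mul (a i)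
    rw [this.fderiv]; simp
  simp only [dop, wop, h1]
  rw [Finset.mul_sum, ← Finset.sum_add_distrib, Finset.mul_sum]
  exact Finset.sum_congr rfl fun i _ => by ring

theorem dop_const_mul (hΩ : IsOpen Ω) (a : ℂ) {g : Pt n → ℂ}
    (hg : ContDiffOn ℝ (⊤ : ℕ∞) g Ω) (d : Fin n × Bool) {x : Pt n} (hx : x ∈ Ω) :
    dop d (fun y => a * g y) x = a * dop d g x := by
  simpa using dop_sum hΩ {()} (fun _ => a) (g := fun _ => g) (fun _ _ => hg) d hx

theorem dop_add (hΩ : IsOpen Ω) {f g : Pt n → ℂ}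
    (hf : ContDiffOn ℝ (⊤ : ℕ∞) f Ω) (hg : ContDiffOn ℝ (⊤ : ℕ∞) g Ω) (d : Fin n × Bool) {x : Pt n} (hx : x ∈ Ω) :
    dop d (fun y => f y + g y) x = dop d f x + dop d g x := by
  simpa using dop_comb hΩ hf hg 1 1 d hx

theorem dop_sub (hΩ : IsOpen Ω) {f g : Pt n → ℂ}
    (hf : ContDiffOn ℝ (⊤ : ℕ∞) f Ω) (hg : ContDiffOn ℝ (⊤ : ℕ∞) g Ω) (d : Fin n × Bool) {x : Pt n} (hx : x ∈ Ω) :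
    dop d (fun y => f y - g y) x = dop d f x - dop d g x := by
  simpa [sub_eq_add_neg] using dop_comb hΩ hf hg 1 (-1) d hx

theorem dop_zero_on (hΩ : IsOpen Ω) {g : Pt n → ℂ} (h : ∀ x ∈ Ω, g x = 0) (d : Fin n × Bool) {x : Pt n} (hx : x ∈ Ω) :
    dop d g x = 0 := by
  rw [dop_congr hΩ (g := fun _ => 0) h d hx, dop_zero]

theorem db_db (hΩ : IsOpen Ω) {F : Finset (Fin n) → Pt n → ℂ} (hF : ∀ S, ContDiffOn ℝ (⊤ : ℕ∞) (F S) Ω)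
    (S : Finset (Fin n)) {x : Pt n} (hx : x ∈ Ω) : db (db F) S x = 0 := by
  have h1 : db (db F) S x = ∑ k ∈ S, ∑ i ∈ S.erase k, sg k S * (sg i (S.erase k) * dop (k, false) (dop (i, false) (F ((S.erase k).erase i))) x) := by
    unfold db
    refine Finset.sum_congr rfl fun k hk => ?_
    rw [← Finset.mul_sum]
    congr 1
    exact dop_sum hΩ _ (fun i => sg i (S.erase k)) (fun i _ => dop_smooth hΩ (hF _) _) _ hx
  rw [h1, Finset.sum_sigma']
  refine Finset.sum_involution (fun a _ => ⟨a.2, a.1⟩) ?_ ?_ ?_ ?_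
  · rintro ⟨k, i⟩ h
    simp only [Finset.mem_sigma, Finset.mem_erase] at h
    simp only
    rw [Finset.erase_right_comm, dop_comm hΩ (hF _) (k, false) (i, false) hx, ← mul_assoc, ← mul_assoc,
      sg_anti h.1 h.2.2 (Ne.symm h.2.1)]
    ring
  · rintro ⟨k, i⟩ h _ e
    simp only [Finset.mem_sigma, Finset.mem_erase] at h
    simp only [Sigma.mk.injEq] at e
    exact h.2.1 e.1
  · rintro ⟨k, i⟩ h
    simp only [Finset.mem_sigma, Finset.mem_erase] at h ⊢
    exact ⟨h.2.2, Ne.symm h.2.1, h.1⟩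
  · rintro ⟨k, i⟩ h; rfl

variable {Γ G : Set (Cn n)} {A A' : Fin n → Set ℂ}

theorem Cls.db (hA : ∀ j, IsOpen (A j)) (hG : IsOpen G) {F : Finset (Fin n) → Pt n → ℂ} (hF : ∀ S, Cls Γ G A (F S)) (S : Finset (Fin n)) :
    Cls Γ G A (db F S) :=
  Cls.sum hA hG S fun k _ => ((hF _).dop hA hG _).const_mul hA hG _

theorem step (hA : ∀ j, IsOpen (A j)) (hG : IsOpen G) (hsub : ∀ j, A' j ⊆ A j) (k : Fin n)
    (hb : Bornology.IsBounded (A k)) {χ : ℂ → ℂ} (hχ : Cut (A k) χ) (hχ1 : ∀ y ∈ A' k, χ y = 1)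
    {F : Finset (Fin n) → Pt n → ℂ} (hF : ∀ S, Cls Γ G A (F S)) (hcl : ∀ S, ∀ x ∈ Om A G, db F S x = 0)
    (P : Fin n → Prop) (hk : ¬ P k) (hP : ∀ S, ∀ j ∈ S, P j → ∀ x ∈ Om A G, F S x = 0) :
    ∃ v : Finset (Fin n) → Pt n → ℂ, (∀ S, Cls Γ G A (v S)) ∧
      ∀ S, ∀ j ∈ S, (P j ∨ j = k) → ∀ x ∈ Om A' G, F S x - db v S x = 0 := by
  have hΩ := isOpen_Om hA hG
  have hc : ∀ S, Cls Γ G A (cauT k χ (F S)) := fun S => (hF S).cauT hA hG hb hχ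
  refine ⟨fun S => if k ∈ S then fun _ => 0 else fun p => sg k S * cauT k χ (F (insert k S)) p, fun S => ?_, fun S j hj hjP x hx' => ?_⟩
  · dsimp only
    split_ifs
    · exact Cls.zero
    · exact (hc _).const_mul hA hG _
  have hx : x ∈ Om A G := Om_mono hsub le_rfl hx'
  by_cases hkS : k ∈ S
  · rw [sub_eq_zero, _root_.db, Finset.sum_eq_single k]
    · rw [if_neg (by simp), Finset.insert_erase hkS, dop_const_mul hΩ _ (hc _).smooth _ hx,
        dzbar_cauT hA hG hχ (hF S).smooth (Om_sub_Os hx), hχ1 _ (hx'.1 k), sg_erase_of_not _ (lt_irrefl k), ← mul_assoc, sg_sq]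
      ring
    · intro i _ hik
      rw [if_pos (by simp [hkS, Ne.symm hik]), dop_zero, mul_zero]
    · exact fun h => absurd hkS h
  · have hjP : P j := by
      rcases hjP with h | h
      · exact h
      · exact absurd (h ▸ hj) hkS
    have hjk : j ≠ k := fun h => hkS (h ▸ hj)
    rw [hP S j hj hjP x hx, zero_sub, neg_eq_zero]
    refine Finset.sum_eq_zero fun i hi => ?_
    dsimp only
    rw [if_neg (fun h => hkS (Finset.mem_of_mem_erase h)), dop_const_mul hΩ _ (hc _).smooth _ hx]
    suffices h : dop (i, false) (cauT k χ (F (insert k (S.erase i)))) x = 0 by rw [h]; simp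
    by_cases hij : i = j
    · subst hij
      rw [dop_cauT_ne hA hG hχ (hF _).smooth (Om_sub_Os hx) _ hjk]
      refine cauT_zero_of hχ (fun y hy => ?_) (Om_sub_Os hx)
      have h1 := hcl (insert k S) y hy
      rw [_root_.db, Finset.sum_eq_single i] at h1
      · rw [Finset.erase_insert_of_ne (Ne.symm hjk)] at h1
        refine (mul_eq_zero.1 h1).resolve_left fun h => ?_
        have := sg_sq i (insert k S)
        rw [h] at this; simp at this
      · intro l _ hl
        rw [dop_zero_on hΩ (hP _ i (by simp [Ne.symm hl, hi]) hjP) _ hy, mul_zero]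
      · intro h; simp [hi] at h
    · refine dop_zero_on hΩ (fun y hy => ?_) _ hx
      exact cauT_zero_of hχ (hP _ j (by simp [Ne.symm hij, hj]) hjP) (Om_sub_Os hy)

def Am (A'' A' : Fin n → Set ℂ) (m : ℕ) (j : Fin n) : Set ℂ := if j.val < m then A'' j else A' j

theorem poincare (A'' A' : Fin n → Set ℂ) (hA'' : ∀ j, IsOpen (A'' j)) (hA' : ∀ j, IsOpen (A' j)) (hG : IsOpen G)
    (hsub : ∀ j, A' j ⊆ A'' j) (hb : ∀ j, Bornology.IsBounded (A'' j)) {χ : Fin n → ℂ → ℂ} (hχ : ∀ k, Cut (A'' k) (χ k))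
    (hχ1 : ∀ k, ∀ y ∈ A' k, χ k y = 1) (m : ℕ) :
    m ≤ n → ∀ F : Finset (Fin n) → Pt n → ℂ, (∀ S, Cls Γ G (Am A'' A' m) (F S)) →
      (∀ S, ∀ x ∈ Om (Am A'' A' m) G, db F S x = 0) → (∀ x ∈ Om (Am A'' A' m) G, F ∅ x = 0) →
      (∀ S, ∀ j ∈ S, m ≤ j.val → ∀ x ∈ Om (Am A'' A' m) G, F S x = 0) →
      ∃ u : Finset (Fin n) → Pt n → ℂ, (∀ S, Cls Γ G A' (u S)) ∧ ∀ S, ∀ x ∈ Om A' G, db u S x = F S x := by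
  have hAm : ∀ m j, IsOpen (Am A'' A' m j) := by
    intro m j; unfold Am; split_ifs
    · exact hA'' j
    · exact hA' j
  have hAs : ∀ m j, A' j ⊆ Am A'' A' m j := by
    intro m j; unfold Am; split_ifs
    · exact hsub j
    · exact le_rfl
  induction m with
  | zero =>
    intro _ F _ _ h0 h1
    refine ⟨fun _ _ => 0, fun _ => Cls.zero, fun S x hx => ?_⟩
    have hx := Om_mono (hAs 0) (le_refl G) hx
    have : db (fun _ _ => (0:ℂ)) S x = 0 := Finset.sum_eq_zero fun k _ => by rw [dop_zero, mul_zero]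
    rw [this]
    rcases S.eq_empty_or_nonempty with rfl | ⟨j, hj⟩
    · exact (h0 x hx).symm
    · exact (h1 S j hj (Nat.zero_le _) x hx).symm
  | succ m ih =>
    intro hm F hF hcl h0 h1
    have hAA : ∀ j, Am A'' A' m j ⊆ Am A'' A' (m+1) j := by
      intro j; unfold Am
      by_cases h : j.val < m
      · simp [h, Nat.lt_succ_of_lt h]
      · rw [if_neg h]; exact hAs (m+1) j
    have hk1 : Am A'' A' (m+1) ⟨m, hm⟩ = A'' ⟨m, hm⟩ := by simp [Am]
    have hk2 : Am A'' A' m ⟨m, hm⟩ = A' ⟨m, hm⟩ := by simp [Am]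
    obtain ⟨v, hv, hv2⟩ := step (hAm (m+1)) hG hAA ⟨m, hm⟩ (hk1 ▸ hb _) (χ := χ ⟨m, hm⟩) (by rw [hk1]; exact hχ _)
      (by rw [hk2]; exact hχ1 _) hF hcl (fun j => m + 1 ≤ j.val) (by simp) h1
    have hΩ := isOpen_Om (hAm (m+1)) hG
    have hΩ' := isOpen_Om hA' hG
    have hOs : Om (Am A'' A' m) G ⊆ Om (Am A'' A' (m+1)) G := Om_mono hAA le_rfl
    have hF' : ∀ S, Cls Γ G (Am A'' A' (m+1)) (fun y => F S y - db v S y) := fun S =>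
      (hF S).sub (hAm _) hG (Cls.db (hAm _) hG hv S)
    have g1 : ∀ S, ∀ x ∈ Om (Am A'' A' m) G, db (fun S y => F S y - db v S y) S x = 0 := by
      intro S x hx
      have hx := hOs hx
      have : db (fun S y => F S y - db v S y) S x = db F S x - db (db v) S x := by
        conv_lhs => unfold db
        conv_rhs => rw [db, db]
        rw [← Finset.sum_sub_distrib]
        refine Finset.sum_congr rfl fun k _ => ?_
        rw [← mul_sub, ← dop_sub hΩ (hF _).smooth (Cls.db (hAm _) hG hv _).smooth _ hx]
        rfl
      rw [this, hcl S x hx, db_db hΩ (fun S => (hv S).smooth) S hx, sub_zero]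
    have g2 : ∀ x ∈ Om (Am A'' A' m) G, F ∅ x - db v ∅ x = 0 := by
      intro x hx
      simp [h0 x (hOs hx), db]
    have g3 : ∀ S, ∀ j ∈ S, m ≤ j.val → ∀ x ∈ Om (Am A'' A' m) G, F S x - db v S x = 0 := by
      intro S j hj hmj x hx
      refine hv2 S j hj ?_ x hx
      rcases Nat.lt_or_eq_of_le hmj with h | h
      · exact Or.inl h
      · exact Or.inr (Fin.ext h.symm)
    obtain ⟨u, hu, hu2⟩ := ih (Nat.le_of_succ_le hm) (fun S y => F S y - db v S y) (fun S => (hF' S).mono hAA) g1 g2 g3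
    refine ⟨fun S y => u S y + v S y, fun S => (hu S).add hA' hG ((hv S).mono (hAs _)), fun S x hx => ?_⟩
    have : db (fun S y => u S y + v S y) S x = db u S x + db v S x := by
      unfold db
      rw [← Finset.sum_add_distrib]
      refine Finset.sum_congr rfl fun k _ => ?_
      rw [dop_add hΩ' (hu _).smooth ((hv _).mono (hAs _)).smooth _ hx]; ring
    rw [this, hu2 S x hx]; ring
end

section
variable {n : ℕ}

theorem exists_cut (c : ℂ) {r ρ : ℝ} (hr : 0 < r) (h : r < ρ) :
    ∃ χ : ℂ → ℂ, Cut (Metric.ball c ρ) χ ∧ ∀ y ∈ Metric.ball c r, χ y = 1 := by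
  let b : ContDiffBump c := ⟨r, (r + ρ)/2, hr, by linarith⟩
  have hs : HasCompactSupport (fun y => ((b y : ℝ) : ℂ)) := b.hasCompactSupport.comp_left (g := ((↑) : ℝ → ℂ)) (by simp)
  refine ⟨fun y => (b y : ℂ), ⟨?_, hs, ?_⟩, fun y hy => ?_⟩
  · exact Complex.ofRealCLM.contDiff.comp b.contDiff
  · have h1 : tsupport (fun y => ((b y : ℝ) : ℂ)) ⊆ tsupport b := by
      refine closure_mono fun y hy => ?_
      simp only [Function.mem_support, ne_eq, Complex.ofReal_eq_zero] at hy ⊢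
      exact hy
    refine h1.trans ?_
    rw [b.tsupport_eq]
    exact Metric.closedBall_subset_ball (by show (r + ρ)/2 < ρ; linarith)
  · have := b.one_of_mem_closedBall (x := y) (Metric.ball_subset_closedBall hy)
    simp [this]

theorem radii {r r' : Fin n → ℝ} {c : Cn n} (hr' : ∀ i, 0 < r' i)
    (hsub : {z : Cn n | ∀ i, ‖z i - c i‖ ≤ r' i} ⊆ {z : Cn n | ∀ i, ‖z i‖ < r i}) (i : Fin n) :
    ‖c i‖ + r' i < r i := by
  obtain ⟨y, hy1, hy2⟩ : ∃ y : ℂ, ‖y - c i‖ ≤ r' i ∧ ‖c i‖ + r' i ≤ ‖y‖ := by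
    by_cases h : c i = 0
    · refine ⟨(r' i : ℂ), ?_, ?_⟩ <;> simp [h, abs_of_pos (hr' i), le_abs_self]
    · have hn : 0 < ‖c i‖ := norm_pos_iff.2 h
      refine ⟨((1 + r' i / ‖c i‖ : ℝ) : ℂ) * c i, ?_, ?_⟩
      · have : ((1 + r' i / ‖c i‖ : ℝ) : ℂ) * c i - c i = ((r' i / ‖c i‖ : ℝ) : ℂ) * c i := by push_cast; ring
        rw [this, norm_mul, Complex.norm_real, Real.norm_of_nonneg (div_nonneg (hr' i).le hn.le), div_mul_cancel₀ _ hn.ne']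
      · rw [norm_mul, Complex.norm_real, Real.norm_of_nonneg (by have := hr' i; positivity), add_mul, div_mul_cancel₀ _ hn.ne', one_mul]
  have := hsub (a := Function.update c i y) (fun j => by
    by_cases hj : j = i
    · subst hj; simpa using hy1
    · simp [hj, (hr' j).le]) i
  simp only [Function.update_self] at this
  linarith

/-- closed polydisc -/
def PC (c : Cn n) (ρ : Fin n → ℝ) : Set (Cn n) := {z | ∀ i, ‖z i - c i‖ ≤ ρ i}

def PO (c : Cn n) (ρ : Fin n → ℝ) : Set (Cn n) := {z | ∀ i, ‖z i - c i‖ < ρ i}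

theorem PC_compact (c : Cn n) (ρ : Fin n → ℝ) : IsCompact (PC c ρ) := by
  have : PC c ρ = Set.pi Set.univ fun i => Metric.closedBall (c i) (ρ i) := by
    ext z; simp [PC, dist_eq_norm]
  rw [this]
  exact isCompact_univ_pi fun i => isCompact_closedBall _ _

theorem PO_open (c : Cn n) (ρ : Fin n → ℝ) : IsOpen (PO c ρ) := by
  have : PO c ρ = Set.pi Set.univ fun i => Metric.ball (c i) (ρ i) := by
    ext z; simp [PO, dist_eq_norm]
  rw [this]
  exact isOpen_set_pi Set.finite_univ fun i _ => Metric.isOpen_ball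

theorem PO_sub (c : Cn n) (ρ : Fin n → ℝ) : PO c ρ ⊆ PC c ρ := fun _ hz i => (hz i).le

theorem PC_sub {c : Cn n} {ρ ρ' : Fin n → ℝ} (h : ∀ i, ρ i < ρ' i) : PC c ρ ⊆ PO c ρ' := fun _ hz i => (hz i).trans_lt (h i)

theorem open_aux (c : Cn n) (ρ : Fin n → ℝ) (K : Set (Cn n)) (s : ℝ) :
    IsOpen {p : Pt n | p.1 ∈ PO c ρ ∧ s • p.2 ∈ interior K} := by
  have h : Continuous fun p : Pt n => s • p.2 := by fun_prop
  exact ((PO_open c ρ).preimage continuous_fst).inter (isOpen_interior.preimage h)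

theorem Om_ball {c : Cn n} {ρ : Fin n → ℝ} {G : Set (Cn n)} {x : Pt n} :
    x ∈ Om (fun j => Metric.ball (c j) (ρ j)) G ↔ x.1 ∈ PO c ρ ∧ x.2 ∈ G := by
  simp [Om, PO, dist_eq_norm]

def Gset (Γ : Set (Cn n)) (W : Set (Pt n)) (P : Set (Cn n)) : Set (Cn n) := {ζ | ζ ∈ Γ ∧ ∀ z ∈ P, (z, ζ) ∈ interior W}

theorem Gset_open {Γ : Set (Cn n)} (hΓ : IsOpen Γ) (W : Set (Pt n)) {P : Set (Cn n)} (hP : IsCompact P) : IsOpen (Gset Γ W P) := by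
  rw [isOpen_iff_mem_nhds]
  rintro ζ ⟨h1, h2⟩
  obtain ⟨u, v, _, hv, hu', hv', huv⟩ := generalized_tube_lemma hP (isCompact_singleton (x := ζ)) (n := interior W) isOpen_interior
    (by rintro ⟨z, ζ'⟩ ⟨hz, hζ⟩; rw [Set.mem_singleton_iff] at hζ; simp only at hζ hz; subst hζ; exact h2 z hz)
  filter_upwards [hΓ.mem_nhds h1, hv.mem_nhds (hv' rfl)] with ζ' h3 h4
  exact ⟨h3, fun z hz => huv ⟨hu' hz, h4⟩⟩

/-- large scaling parameter -/
theorem SK_scale {K : Set (Cn n)} (hK : IsCompact K) {δ0 : ℝ} (hδ0 : 0 < δ0) :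
    ∃ δ : ℝ, ∀ ζ ∈ SK K δ, ∃ t : ℝ, δ0 < t ∧ ∃ κ ∈ K, ζ = t • κ := by
  obtain ⟨R, hR, hKR⟩ := hK.isBounded.subset_closedBall_lt 0 (0 : Cn n)
  refine ⟨δ0 * R, ?_⟩
  rintro ζ ⟨⟨t, ht, κ, hκ, rfl⟩, h⟩
  refine ⟨t, ?_, κ, hκ, rfl⟩
  have h1 : ‖κ‖ ≤ R := by simpa using hKR hκ
  rw [norm_smul, Real.norm_of_nonneg ht.le] at h
  have : t * ‖κ‖ ≤ t * R := by gcongr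
  exact lt_of_mul_lt_mul_right (h.trans_le this) hR.le

theorem SK_large {K : Set (Cn n)} (hK : IsCompact K) (h0 : (0 : Cn n) ∉ K) (δ1 : ℝ) :
    ∃ δ : ℝ, 0 < δ ∧ ∀ κ ∈ K, ∀ t : ℝ, δ < t → t • κ ∈ SK K δ1 := by
  obtain ⟨ε, hε, hb⟩ := Metric.mem_nhds_iff.1 (hK.isClosed.isOpen_compl.mem_nhds h0)
  refine ⟨|δ1| / ε + 1, by positivity, fun κ hκ t ht => ⟨⟨t, lt_trans (by positivity) ht, κ, hκ, rfl⟩, ?_⟩⟩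
  have h1 : ε ≤ ‖κ‖ := by
    by_contra! h
    exact hb (by simpa using h) hκ
  have ht0 : 0 < t := lt_trans (by positivity) ht
  rw [norm_smul, Real.norm_of_nonneg ht0.le]
  have h2 : |δ1| / ε < t := by linarith
  rw [div_lt_iff₀ hε] at h2
  calc δ1 ≤ |δ1| := le_abs_self _
    _ < t * ε := h2
    _ ≤ t * ‖κ‖ := by gcongr

variable {Γ : Set (Cn n)} {W D : Set (Pt n)} {c : Cn n} {ρ1 ρ2 : Fin n → ℝ}

theorem Gset_wedge (hΓ : IsOpen Γ) (hcone : ∀ ζ ∈ Γ, ∀ t : ℝ, 0 < t → t • ζ ∈ Γ) {D : Set (Cn n)} (hW : IsInfWedge (D ×ˢ Γ) W)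
    (hρ : ∀ i, ρ1 i < ρ2 i) (hD : PC c ρ2 ⊆ D) {K : Set (Cn n)} (hK : IsCompact K) (hKΓ : K ⊆ Γ) :
    ∃ δ, SK K δ ⊆ Gset Γ W (PC c ρ1) := by
  obtain ⟨K1, hK1, hKK1, hK1Γ⟩ := exists_compact_between hK hΓ hKΓ
  have hc := (PC_compact c ρ2).prod hK1
  obtain ⟨δ0, hδ0, h⟩ := hW.2 (PC c ρ2 ×ˢ K1) ⟨by rwa [hc.isClosed.closure_eq], by rw [hc.isClosed.closure_eq]; exact Set.prod_mono hD hK1Γ⟩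
  obtain ⟨δ, hδ⟩ := SK_scale hK hδ0
  refine ⟨δ, fun ζ hζ => ?_⟩
  obtain ⟨t, ht, κ, hκ, rfl⟩ := hδ ζ hζ
  have ht0 := hδ0.trans ht
  refine ⟨hcone κ (hKΓ hκ) t ht0, fun z hz => ?_⟩
  rw [mem_interior]
  refine ⟨{p | p.1 ∈ PO c ρ2 ∧ t⁻¹ • p.2 ∈ interior K1}, ?_, ?_, ?_⟩
  · rintro ⟨z', ζ'⟩ ⟨h1, h2⟩
    have := h (z', t⁻¹ • ζ') ⟨PO_sub _ _ h1, interior_subset h2⟩ t ht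
    simpa [smul_smul, mul_inv_cancel₀ ht0.ne'] using this
  · exact open_aux _ _ _ _
  · refine ⟨PC_sub hρ hz, ?_⟩
    simpa [smul_smul, inv_mul_cancel₀ ht0.ne'] using hKK1 hκ

theorem null_Cls (hΓ : IsOpen Γ) (hcone : ∀ ζ ∈ Γ, ∀ t : ℝ, 0 < t → t • ζ ∈ Γ) {D : Set (Cn n)} {f : Pt n → ℂ}
    (hf : IsNullSymbolInf (D ×ˢ Γ) W f)
    (hρ : ∀ i, ρ1 i < ρ2 i) (hD : PC c ρ2 ⊆ D) :
    Cls Γ (Gset Γ W (PC c ρ1)) (fun j => Metric.ball (c j) (ρ1 j)) f := by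
  obtain ⟨hW, ⟨hsm, hhol⟩, hbd⟩ := hf
  have hint : Om (fun j => Metric.ball (c j) (ρ1 j)) (Gset Γ W (PC c ρ1)) ⊆ interior W := by
    intro x hx
    rw [Om_ball] at hx
    exact hx.2.2 x.1 (PO_sub _ _ hx.1)
  have hsm' : ContDiffOn ℝ (⊤ : ℕ∞) f (Om (fun j => Metric.ball (c j) (ρ1 j)) (Gset Γ W (PC c ρ1))) := hsm.mono (hint.trans interior_subset)
  have hΩ : IsOpen (Om (fun j => Metric.ball (c j) (ρ1 j)) (Gset Γ W (PC c ρ1))) :=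
    isOpen_Om (fun j => Metric.isOpen_ball) (Gset_open hΓ W (PC_compact c ρ1))
  refine ⟨hsm', fun x hx v => ?_, fun K hK hKΓ => ?_⟩
  · have hn : {ζ : Cn n | (x.1, ζ) ∈ W} ∈ nhds x.2 := by
      have : Continuous fun ζ : Cn n => (x.1, ζ) := by fun_prop
      exact this.continuousAt.preimage_mem_nhds (mem_interior_iff_mem_nhds.1 (hint hx))
    have h1 : DifferentiableAt ℂ (fun ζ => f (x.1, ζ)) x.2 := (hhol x.1).differentiableAt hn
    have h2 := h1.hasFDerivAt.restrictScalars ℝ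
    have h3 : HasFDerivAt (fun ζ : Cn n => f (x.1, ζ)) ((fderiv ℝ f x).comp (ContinuousLinearMap.inr ℝ (Cn n) (Cn n))) x.2 :=
      (fd_diff hΩ hsm' hx).hasFDerivAt.comp x.2 (hasFDerivAt_prodMk_right x.1 x.2)
    have h4 := h3.unique h2
    have h5 : ∀ v, fderiv ℝ f x (0, v) = fderiv ℂ (fun ζ => f (x.1, ζ)) x.2 v := fun v => by
      have := DFunLike.congr_fun h4 v
      simpa using this
    rw [h5, h5, map_smul, smul_eq_mul]
  · obtain ⟨K1, hK1, hKK1, hK1Γ⟩ := exists_compact_between hK hΓ hKΓ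
    have hc := (PC_compact c ρ2).prod hK1
    have hcl : closure (PO c ρ2 ×ˢ interior K1) ⊆ PC c ρ2 ×ˢ K1 :=
      closure_minimal (Set.prod_mono (PO_sub _ _) interior_subset) hc.isClosed
    set V' : Set (Pt n) := {p : Pt n | ∃ t : ℝ, 0 < t ∧ ∃ q ∈ PO c ρ2 ×ˢ interior K1, p = (q.1, t • q.2)} with hV'
    have hV'e : ∀ p : Pt n, p ∈ V' ↔ ∃ t : ℝ, 0 < t ∧ p.1 ∈ PO c ρ2 ∧ t⁻¹ • p.2 ∈ interior K1 := by
      intro p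
      constructor
      · rintro ⟨t, ht, q, hq, rfl⟩
        exact ⟨t, ht, hq.1, by simpa [smul_smul, inv_mul_cancel₀ ht.ne'] using hq.2⟩
      · rintro ⟨t, ht, h1, h2⟩
        exact ⟨t, ht, (p.1, t⁻¹ • p.2), ⟨h1, h2⟩, by simp [smul_smul, mul_inv_cancel₀ ht.ne']⟩
    have hVo : IsOpen V' := by
      have : V' = ⋃ t : {t : ℝ // 0 < t}, {p | p.1 ∈ PO c ρ2 ∧ (t:ℝ)⁻¹ • p.2 ∈ interior K1} := by
        ext p; rw [hV'e]
        simp only [Set.mem_iUnion, Set.mem_ofPred_eq]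
        exact ⟨fun ⟨t, ht, h⟩ => ⟨⟨t, ht⟩, h⟩, fun ⟨t, h⟩ => ⟨t, t.2, h⟩⟩
      rw [this]
      exact isOpen_iUnion fun t => open_aux _ _ _ _
    have hVc : IsCone V' := by
      rintro p ⟨s, hs, q, hq, rfl⟩ t ht
      exact ⟨t * s, mul_pos ht hs, q, hq, by simp [smul_smul]⟩
    obtain ⟨W', hW'W, hW', hb⟩ := hbd V' hVo hVc
      ⟨_, ⟨hc.of_isClosed_subset isClosed_closure hcl, hcl.trans (Set.prod_mono hD hK1Γ)⟩, hV'⟩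
    have hc2 := (PC_compact c ρ1).prod hK
    obtain ⟨δ0, hδ0, h⟩ := hW'.2 (PC c ρ1 ×ˢ K) (by
      refine ⟨by rwa [hc2.isClosed.closure_eq], ?_⟩
      rw [hc2.isClosed.closure_eq]
      rintro ⟨z, κ⟩ ⟨hz, hκ⟩
      exact ⟨1, one_pos, (z, κ), ⟨PC_sub hρ hz, hKK1 hκ⟩, by simp⟩)
    obtain ⟨δ, hδ⟩ := SK_scale hK hδ0
    refine ⟨δ, fun w => ?_⟩
    obtain ⟨a, C, ha, hC, hbb⟩ := hb (fun i => w.count (i, true)) (fun i => w.count (i, false))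
    refine ⟨a, C, ha, hC, fun p hp => ?_⟩
    have hp1 := Om_mono (fun _ => le_rfl) Set.inter_subset_left hp
    rw [Dw_perm hΩ hsm' (word_perm w) hp1, ← mixedDeriv_eq]
    refine hbb p ?_
    rw [Om_ball] at hp
    obtain ⟨t, ht, κ, hκ, e⟩ := hδ p.2 hp.2.2
    have := h (p.1, κ) ⟨PO_sub _ _ hp.1, hκ⟩ t ht
    simp only [← e] at this
    exact this

theorem wedge_Om {G : Set (Cn n)} (h0 : (0 : Cn n) ∉ Γ) (hGΓ : G ⊆ Γ) (hG : ∀ K, IsCompact K → K ⊆ Γ → ∃ δ, SK K δ ⊆ G)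
    (r' : Fin n → ℝ) : IsInfWedge (PO c r' ×ˢ Γ) (Om (fun j => Metric.ball (c j) (r' j)) G) := by
  refine ⟨fun x hx => ?_, fun K hK => ?_⟩
  · rw [Om_ball] at hx
    exact ⟨hx.1, hGΓ hx.2⟩
  · have hc : IsCompact (Prod.snd '' closure K) := hK.1.image continuous_snd
    have hs : Prod.snd '' closure K ⊆ Γ := by
      rintro _ ⟨x, hx, rfl⟩; exact (hK.2 hx).2
    obtain ⟨δ1, hδ1⟩ := hG _ hc hs
    obtain ⟨δ, hδ, h⟩ := SK_large hc (fun h => h0 (hs h)) δ1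
    refine ⟨δ, hδ, fun p hp t ht => ?_⟩
    rw [Om_ball]
    exact ⟨(hK.2 (subset_closure hp)).1, hδ1 (h p.2 ⟨p, subset_closure hp, rfl⟩ t ht)⟩

theorem Cls_null {G : Set (Cn n)} (h0 : (0 : Cn n) ∉ Γ) (hcone : ∀ ζ ∈ Γ, ∀ t : ℝ, 0 < t → t • ζ ∈ Γ)
    (hGo : IsOpen G) (hGΓ : G ⊆ Γ) (hG : ∀ K, IsCompact K → K ⊆ Γ → ∃ δ, SK K δ ⊆ G)
    (r' : Fin n → ℝ) {g : Pt n → ℂ} (hg : Cls Γ G (fun j => Metric.ball (c j) (r' j)) g) :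
    IsNullSymbolInf (PO c r' ×ˢ Γ) (Om (fun j => Metric.ball (c j) (r' j)) G) g := by
  have hΩ : IsOpen (Om (fun j => Metric.ball (c j) (r' j)) G) := isOpen_Om (fun j => Metric.isOpen_ball) hGo
  refine ⟨wedge_Om h0 hGΓ hG r', ⟨hg.smooth, fun z ζ hζ => ?_⟩, fun V' _ hVc hVr => ?_⟩
  · have hx : (z, ζ) ∈ Om (fun j => Metric.ball (c j) (r' j)) G := hζ
    have h3 : HasFDerivAt (fun ζ : Cn n => g (z, ζ)) ((fderiv ℝ g (z, ζ)).comp (ContinuousLinearMap.inr ℝ (Cn n) (Cn n))) ζ :=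
      (fd_diff hΩ hg.smooth hx).hasFDerivAt.comp ζ (hasFDerivAt_prodMk_right z ζ)
    let L : Cn n →L[ℂ] ℂ :=
      { toFun := fun v => fderiv ℝ g (z, ζ) (0, v)
        map_add' := fun u v => by
          rw [← map_add]; simp
        map_smul' := fun a v => by
          have e : ((0 : Cn n), a • v) = a.re • ((0 : Cn n), v) + a.im • ((0 : Cn n), I • v) := by
            ext i
            · simp
            · simp only [Prod.smul_mk, Prod.mk_add_mk, Pi.smul_apply, Pi.add_apply, smul_eq_mul, Complex.real_smul]
              rw [← mul_assoc, ← add_mul, Complex.re_add_im]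
          rw [e, map_add, map_smul, map_smul, hg.holo _ hx]
          simp only [Complex.real_smul, RingHom.id_apply, smul_eq_mul]
          rw [← mul_assoc, ← add_mul, Complex.re_add_im]
        cont := by fun_prop }
    have h4 : HasFDerivAt (𝕜 := ℂ) (fun ζ : Cn n => g (z, ζ)) L ζ := by
      refine hasFDerivAt_of_restrictScalars ℝ h3 ?_
      ext v; simp [L]
    exact h4.differentiableAt.differentiableWithinAt
  · obtain ⟨K, hK, hVK⟩ := hVr
    have hc : IsCompact (Prod.snd '' closure K) := hK.1.image continuous_snd
    have hs : Prod.snd '' closure K ⊆ Γ := by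
      rintro _ ⟨x, hx, rfl⟩; exact (hK.2 hx).2
    obtain ⟨δ, hδ⟩ := hg.bd _ hc hs
    have hVsub : ∀ p ∈ V', p.1 ∈ PO c r' ∧ p.2 ∈ Γ ∧ ∃ t : ℝ, 0 < t ∧ ∃ κ ∈ Prod.snd '' closure K, p.2 = t • κ := by
      intro p hp
      rw [hVK] at hp
      obtain ⟨t, ht, q, hq, rfl⟩ := hp
      have := hK.2 (subset_closure hq)
      exact ⟨this.1, hcone _ this.2 t ht, t, ht, q.2, ⟨q, subset_closure hq, rfl⟩, rfl⟩
    refine ⟨V' ∩ Om (fun j => Metric.ball (c j) (r' j)) (G ∩ SK (Prod.snd '' closure K) δ), fun x hx => ?_, ⟨Set.inter_subset_left, fun L hL => ?_⟩, fun α β => ?_⟩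
    · exact Om_mono (fun _ => le_rfl) Set.inter_subset_left hx.2
    · have hcL : IsCompact (Prod.snd '' closure L) := hL.1.image continuous_snd
      have hsL : Prod.snd '' closure L ⊆ Γ := by
        rintro _ ⟨x, hx, rfl⟩; exact (hVsub x (hL.2 hx)).2.1
      obtain ⟨δ2, hδ2⟩ := hG _ hcL hsL
      obtain ⟨δ3, hδ3, h3⟩ := SK_large hcL (fun h => h0 (hsL h)) (max δ δ2)
      refine ⟨δ3, hδ3, fun p hp t ht => ?_⟩
      have hpL := hL.2 (subset_closure hp)
      have h4 := h3 p.2 ⟨p, subset_closure hp, rfl⟩ t ht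
      have hV1 := hVc p hpL t (hδ3.trans ht)
      refine ⟨hV1, ?_⟩
      rw [Om_ball]
      exact ⟨(hVsub p hpL).1, hδ2 (SK_anti (le_max_right _ _) h4), (hVsub _ hV1).2.2, (le_max_left _ _).trans_lt h4.2⟩
    · obtain ⟨a, C, ha, hC, hb⟩ := hδ (wdl true α ++ wdl false β)
      refine ⟨a, C, ha, hC, fun p hp => ?_⟩
      rw [mixedDeriv_eq]
      exact hb p hp.2

theorem sg_image {m : ℕ} {J : Fin m → Fin n} (hJ : StrictMono J) (l : Fin m) : sg (J l) (Finset.univ.image J) = (-1) ^ (l : ℕ) := by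
  unfold sg
  have : (Finset.univ.image J).filter (fun j => j < J l) = (Finset.Iio l).image J := by
    ext j
    simp only [Finset.mem_filter, Finset.mem_image, Finset.mem_univ, true_and, Finset.mem_Iio]
    constructor
    · rintro ⟨⟨i, rfl⟩, h⟩; exact ⟨i, hJ.lt_iff_lt.1 h, rfl⟩
    · rintro ⟨i, h, rfl⟩; exact ⟨⟨i, rfl⟩, hJ h⟩
  rw [this, Finset.card_image_of_injective _ hJ.injective, Fin.card_Iio]

theorem erase_image {m : ℕ} {J : Fin (m + 1) → Fin n} (hJ : StrictMono J) (l : Fin (m + 1)) :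
    (Finset.univ.image J).erase (J l) = Finset.univ.image (J ∘ l.succAbove) := by
  ext j
  simp only [Finset.mem_erase, Finset.mem_image, Finset.mem_univ, true_and, Function.comp_apply]
  constructor
  · rintro ⟨h, i, rfl⟩
    obtain ⟨k, rfl⟩ := Fin.exists_succAbove_eq (x := i) (y := l) (fun e => h (by rw [e]))
    exact ⟨k, rfl⟩
  · rintro ⟨k, rfl⟩
    exact ⟨fun e => Fin.succAbove_ne l k (hJ.injective e), _, rfl⟩

theorem db_image {m : ℕ} {J : Fin (m + 1) → Fin n} (hJ : StrictMono J) (U : Finset (Fin n) → Pt n → ℂ) (x : Pt n) :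
    db U (Finset.univ.image J) x = ∑ l : Fin (m + 1), ((-1 : ℂ) ^ (l : ℕ)) *
      dzbar (J l) (U (Finset.univ.image (J ∘ l.succAbove))) x := by
  unfold db
  rw [Finset.sum_image fun a _ b _ h => hJ.injective h]
  refine Finset.sum_congr rfl fun l _ => ?_
  rw [sg_image hJ, erase_image hJ, dzbar_eq]

/-- form indexed by finite sets -/
def fset {m : ℕ} (f : (Fin m → Fin n) → Pt n → ℂ) (S : Finset (Fin n)) : Pt n → ℂ :=
  if h : S.card = m then f (S.orderEmbOfFin h) else fun _ => 0

theorem fset_image {m : ℕ} (f : (Fin m → Fin n) → Pt n → ℂ) {J : Fin m → Fin n} (hJ : StrictMono J) :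
    fset f (Finset.univ.image J) = f J := by
  have h : (Finset.univ.image J).card = m := by rw [Finset.card_image_of_injective _ hJ.injective]; simp
  rw [fset, dif_pos h, ← Finset.orderEmbOfFin_unique h (fun x => Finset.mem_image_of_mem J (Finset.mem_univ x)) hJ]

theorem exists_image {m : ℕ} {S : Finset (Fin n)} (h : S.card = m) : ∃ J : Fin m → Fin n, StrictMono J ∧ S = Finset.univ.image J :=
  ⟨S.orderEmbOfFin h, (S.orderEmbOfFin h).strictMono, by
    have := S.range_orderEmbOfFin h
    apply Finset.coe_injective
    rw [Finset.coe_image, ← this]; simp⟩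

end

/-- (Dolbeault lemma for null-symbols of `C^∞`-type, Proposition
`exist` in the paper.) Let `D` be an open polydisc centered at the origin with radii
`r i`, `Γ` an open convex cone, `V = D × Γ`.  If the coefficients `f I J` (for `I, J`
strictly increasing multi-indices of lengths `p` and `q+1`) of a `∂̄_z`-closed
`(p, q+1)`-form in `z` all belong to `𝔑^∞(V)` on a common infinitesimal wedge `W` of
type `V`, then on every polydisc `D'` with closure contained in `D` one can solve
`∂̄_z u = f` with coefficients `u I L ∈ 𝔑^∞(D' × Γ)`. -/
theorem dbar_solvable_nullSymbolInf {n p q : ℕ}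
    (r : Fin n → ℝ) (hr : ∀ i, 0 < r i)
    (Γ : Set (Cn n)) (hΓopen : IsOpen Γ) (hΓ0 : (0 : Cn n) ∉ Γ)
    (hΓcone : ∀ ζ ∈ Γ, ∀ t : ℝ, 0 < t → t • ζ ∈ Γ) (hΓconv : Convex ℝ Γ)
    (W : Set (Pt n))
    (hW : IsInfWedge ({z : Cn n | ∀ i, ‖z i‖ < r i} ×ˢ Γ) W)
    (f : (Fin p → Fin n) → (Fin (q + 1) → Fin n) → Pt n → ℂ)
    (hf : ∀ I J, StrictMono I → StrictMono J →
      IsNullSymbolInf ({z : Cn n | ∀ i, ‖z i‖ < r i} ×ˢ Γ) W (f I J))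
    (hclosed : ∀ I, StrictMono I → ∀ K : Fin (q + 2) → Fin n, StrictMono K →
      ∀ x ∈ W, ∑ ℓ : Fin (q + 2), ((-1 : ℂ) ^ (ℓ : ℕ)) *
        dzbar (K ℓ) (f I (K ∘ ℓ.succAbove)) x = 0)
    (c : Cn n) (r' : Fin n → ℝ) (hr' : ∀ i, 0 < r' i)
    (hsub : {z : Cn n | ∀ i, ‖z i - c i‖ ≤ r' i} ⊆ {z : Cn n | ∀ i, ‖z i‖ < r i}) :
    ∃ u : (Fin p → Fin n) → (Fin q → Fin n) → Pt n → ℂ,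
      (∀ I L, StrictMono I → StrictMono L →
        ∃ Wu : Set (Pt n),
          IsNullSymbolInf ({z : Cn n | ∀ i, ‖z i - c i‖ < r' i} ×ˢ Γ) Wu (u I L)) ∧
      ∃ W'' : Set (Pt n),
        IsInfWedge ({z : Cn n | ∀ i, ‖z i - c i‖ < r' i} ×ˢ Γ) W'' ∧
        ∀ I J, StrictMono I → StrictMono J →
          ∀ x ∈ W'', ∑ ℓ : Fin (q + 1), ((-1 : ℂ) ^ (ℓ : ℕ)) *
            dzbar (J ℓ) (u I (J ∘ ℓ.succAbove)) x = f I J x := by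
  classical
  have hrad := radii hr' hsub
  set ρ1 : Fin n → ℝ := fun i => r' i + (r i - (‖c i‖ + r' i)) / 3 with hρ1
  set ρ2 : Fin n → ℝ := fun i => r' i + 2 * (r i - (‖c i‖ + r' i)) / 3 with hρ2
  have h01 : ∀ i, r' i < ρ1 i := fun i => by have := hrad i; simp only [hρ1]; linarith
  have h12 : ∀ i, ρ1 i < ρ2 i := fun i => by have := hrad i; simp only [hρ1, hρ2]; linarith
  have hD : PC c ρ2 ⊆ {z : Cn n | ∀ i, ‖z i‖ < r i} := by
    intro z hz i
    have h1 := hz i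
    have h2 := hrad i
    have h3 : ‖z i‖ ≤ ‖z i - c i‖ + ‖c i‖ := by simpa using norm_add_le (z i - c i) (c i)
    simp only [hρ2] at h1
    linarith
  set G : Set (Cn n) := Gset Γ W (PC c ρ1) with hGdef
  have hGo : IsOpen G := Gset_open hΓopen W (PC_compact c ρ1)
  have hGΓ : G ⊆ Γ := fun ζ h => h.1
  have hGw : ∀ K, IsCompact K → K ⊆ Γ → ∃ δ, SK K δ ⊆ G := fun K hK hKΓ => Gset_wedge hΓopen hΓcone hW h12 hD hK hKΓ
  have hχ : ∀ k, ∃ χ : ℂ → ℂ, Cut (Metric.ball (c k) (ρ1 k)) χ ∧ ∀ y ∈ Metric.ball (c k) (r' k), χ y = 1 :=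
    fun k => exists_cut (c k) (hr' k) (h01 k)
  choose χ hχ1 hχ2 using hχ
  have hOW : Om (fun j => Metric.ball (c j) (ρ1 j)) G ⊆ W := by
    intro x hx
    rw [Om_ball] at hx
    exact interior_subset (hx.2.2 x.1 (PO_sub _ _ hx.1))
  have hbb : ∀ j, Metric.ball (c j) (r' j) ⊆ Metric.ball (c j) (ρ1 j) := fun j => Metric.ball_subset_ball (h01 j).le
  have main : ∀ I : Fin p → Fin n, ∃ u : Finset (Fin n) → Pt n → ℂ, StrictMono I →
      (∀ S, Cls Γ G (fun j => Metric.ball (c j) (r' j)) (u S)) ∧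
        ∀ S, ∀ x ∈ Om (fun j => Metric.ball (c j) (r' j)) G, db u S x = fset (f I) S x := by
    intro I
    by_cases hI : StrictMono I
    swap
    · exact ⟨fun _ _ => 0, fun h => absurd h hI⟩
    have hAm : Am (fun j => Metric.ball (c j) (ρ1 j)) (fun j => Metric.ball (c j) (r' j)) n = fun j => Metric.ball (c j) (ρ1 j) := by
      ext j; simp [Am]
    obtain ⟨u, hu⟩ := poincare (Γ := Γ) (G := G) (fun j => Metric.ball (c j) (ρ1 j)) (fun j => Metric.ball (c j) (r' j))
      (fun _ => Metric.isOpen_ball) (fun _ => Metric.isOpen_ball) hGo hbb (fun _ => Metric.isBounded_ball) hχ1 hχ2 n le_rfl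
      (fset (f I)) (by
        intro S
        rw [hAm]
        by_cases hS : S.card = q + 1
        · obtain ⟨J, hJ, rfl⟩ := exists_image hS
          rw [fset_image _ hJ]
          exact null_Cls hΓopen hΓcone (hf I J hI hJ) h12 hD
        · rw [fset, dif_neg hS]; exact Cls.zero) (by
        intro S x hx
        rw [hAm] at hx
        by_cases hS : S.card = q + 2
        · obtain ⟨K, hK, rfl⟩ := exists_image hS
          rw [db_image hK]
          rw [← hclosed I hI K hK x (hOW hx)]
          refine Finset.sum_congr rfl fun l _ => ?_
          rw [fset_image _ (hK.comp (Fin.strictMono_succAbove l))]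
        · refine Finset.sum_eq_zero fun k hk => ?_
          have : (S.erase k).card ≠ q + 1 := by
            intro h
            have := Finset.card_erase_add_one hk
            omega
          rw [fset, dif_neg this, dop_zero, mul_zero]) (by
        intro x _
        rw [fset, dif_neg (by simp)]) (by
        intro S j _ hj
        exact absurd j.2 (not_lt.2 hj))
    exact ⟨u, fun _ => hu⟩
  choose U hU using main
  refine ⟨fun I L => U I (Finset.univ.image L), fun I L hI hL => ⟨_, Cls_null hΓ0 hΓcone hGo hGΓ hGw r' ((hU I hI).1 _)⟩,
    _, wedge_Om hΓ0 hGΓ hGw r', fun I J hI hJ x hx => ?_⟩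
  have := (hU I hI).2 (Finset.univ.image J) x hx
  rw [db_image hJ, fset_image _ hJ] at this
  exact this
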